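/- arXiv:1809.01767 — 6 statements merged into one kernel-verified Lean document; each statement's English description precedes it below -/
import Mathlib

section
/- For all positive integers n, k, and l with k > l, the maximum size of a (k,l)-sum-free subset of the cyclic group Z_n equals max over all positive divisors d of n of ⌈(d − (δ − r))/(k + l)⌉ · (n/d), where δ = gcd(d, k − l) and r is the remainder of l·⌈(d − δ)/(k + l)⌉ upon division by δ. -/
/-!
The lower bound is explicit. For `d ∣ n`, an interval `{β, …, β + t}` in `ZMod d` is `(k, l)`-sum-free
as soon as `(k - l) β - l t` is congruent modulo `d` to some `c` with `1 ≤ c ≤ d - 1 - (k + l) t`. Such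
a `β` exists exactly when some `c` in this range satisfies `c ≡ -l t` modulo `δ = gcd (d, k - l)`, and
`lt_gam_iff` says that this holds precisely for interval lengths up to the `d`-th ceiling. The
preimage of the interval in `ZMod n` has `n / d` times as many elements (`exists_sumFree`).

For the upper bound, let `A` be `(k, l)`-sum-free, that is, `0 ∉ kA - lA`. Passing to the quotient by
the stabilizer of `kA - lA` (`exists_card_le`), one may assume that this stabilizer is trivial, in
a group of order `d`. If `A` is not contained in a coset of a proper subgroup, there are two cases
(`card_le_or_progression`). Call `A` Vosper if `#(X + A) ≥ #X + #A` whenever `#X ≥ 2` and `X + A` misses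
at least two elements.
* If `A` is Vosper, then `(k + l) #A ≤ d`, which implies the bound.
* If not, a structure theorem (`exists_pair_or_coset`) produces a failing `X` that is either a coset of
  a nontrivial subgroup `H` or a pair. A coset would make `H` a period of `kA - lA`
  (`not_almost_periodic`). A pair forces `A` to be an arithmetic progression whose difference generates
  the group, and for those the computation of the lower bound can be reversed
  (`progression_lt_gam`).

If `A` lies in a coset of a proper subgroup `K`, the same dichotomy inside `K` gives
`(k + l) (#A - 1) + 1 ≤ #K ≤ d / 2`, and `δ ≤ d / 2` because `k a ≠ l a`; this suffices.

The structure theorem is proved with Hamidoune's isoperimetric method: a smallest set `M` minimizing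
`#(X + A) - #X` among the admissible `X` (a `2`-atom) is either a coset or meets each of its nontrivial
translates at most once, and in the latter case it has only two elements
(`IsTwoAtom.card_le_two_of_sidonLike`).
-/

open Finset Pointwise

/-- The `h`-fold sumset of a finite set `A`: all sums of `h` not-necessarily-distinct
elements of `A` (with the convention that the `0`-fold sumset is `{0}`). -/
def foldSum {G : Type*} [AddCommMonoid G] [DecidableEq G] : ℕ → Finset G → Finset G
  | 0, _ => {0}
  | n + 1, A => A + foldSum n A

/-- `A` is `(k,l)`-sum-free if the `k`-fold and `l`-fold sumsets of `A` are disjoint. -/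
def KLSumFree {G : Type*} [AddCommMonoid G] [DecidableEq G] (k l : ℕ) (A : Finset G) : Prop :=
  Disjoint (foldSum k A) (foldSum l A)

/-- `mu G k l` is the maximum size of a `(k,l)`-sum-free subset of `G`. -/
noncomputable def mu (G : Type*) [AddCommMonoid G] [DecidableEq G] (k l : ℕ) : ℕ :=
  sSup {m | ∃ A : Finset G, KLSumFree k l A ∧ A.card = m}

/-- Ceiling division: `cdiv a b = ⌈a / b⌉` for `b > 0`. -/
def cdiv (a b : ℕ) : ℕ := (a + b - 1) / b

/-- The arithmetic progression `{a, a+b, ..., a+(m-1)b}` in `ZMod d`. -/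
def apSet (d : ℕ) (a b : ZMod d) (m : ℕ) : Finset (ZMod d) :=
  (Finset.range m).image (fun i => a + i • b)

/-- Maximum size of a `(k,l)`-sum-free arithmetic progression in `ZMod d`. -/
noncomputable def alphaZ (d k l : ℕ) : ℕ :=
  sSup {m | ∃ a b : ZMod d, (apSet d a b m).card = m ∧ KLSumFree k l (apSet d a b m)}

/-- Maximum size of a `(k,l)`-sum-free arithmetic progression in `ZMod d` whose common
difference is relatively prime to `d`. -/
noncomputable def gammaZ (d k l : ℕ) : ℕ :=
  sSup {m | ∃ a b : ZMod d, Nat.gcd (ZMod.val b) d = 1 ∧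
    (apSet d a b m).card = m ∧ KLSumFree k l (apSet d a b m)}

/-! ### Two-atoms -/

set_option linter.unusedSectionVars false

section Atoms

variable {G : Type*} [AddCommGroup G] [Fintype G] [DecidableEq G]

/-- `X` is admissible for `S`: it has at least two elements and its sumset with `S` misses at least
two elements of the group. -/
def Adm (S X : Finset G) : Prop := 2 ≤ #X ∧ #(X + S) + 2 ≤ Fintype.card G

/-- `M` is a `2`-atom of `S`: among the admissible sets `X` minimizing `#(X + S) - #X`, it has the
smallest cardinality. The inequalities are written additively to avoid truncated subtraction. -/
structure IsTwoAtom (S M : Finset G) : Prop where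
  adm : Adm S M
  min : ∀ X, Adm S X → #(M + S) + #X ≤ #(X + S) + #M
  small : ∀ X, Adm S X → #(X + S) + #M ≤ #(M + S) + #X → #M ≤ #X

/-- Distinct translates of `M` share at most one element. -/
def SidonLike (M : Finset G) : Prop := ∀ a : G, a ≠ 0 → #(M ∩ (a +ᵥ M)) ≤ 1

/-- `B` is not contained in a coset of a proper subgroup. -/
def Gen (B : Finset G) : Prop :=
  ∀ K : AddSubgroup G, (∃ c, ∀ b ∈ B, b - c ∈ K) → K = ⊤

open Classical in
/-- The elements of a subgroup as a finset of the ambient group. -/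
noncomputable def sf (H : AddSubgroup G) : Finset G := univ.filter (· ∈ H)

@[simp] lemma mem_sf {H : AddSubgroup G} {x : G} : x ∈ sf H ↔ x ∈ H := by simp [sf]

lemma card_sf (H : AddSubgroup G) : #(sf H) = Nat.card H := by
  classical
  rw [Nat.card_eq_fintype_card, Fintype.card_subtype, sf]

lemma exists_twoAtom {S X : Finset G} (hX : Adm S X) : ∃ M, IsTwoAtom S M := by
  classical
  obtain ⟨Y, hY, hYmin⟩ := Finset.exists_min_image (univ.filter (fun X : Finset G => Adm S X))
    (fun X => (#(X + S) : ℤ) - #X) ⟨X, by simpa using hX⟩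
  obtain ⟨M, hM, hMmin⟩ := Finset.exists_min_image
    (univ.filter (fun X : Finset G => Adm S X ∧ (#(X + S) : ℤ) - #X ≤ #(Y + S) - #Y))
    (fun X => #X) ⟨Y, by simpa using hY⟩
  simp only [mem_filter, mem_univ, true_and] at hY hYmin hM hMmin
  refine ⟨M, hM.1, fun X hX => ?_, fun X hX h => hMmin X ⟨hX, ?_⟩⟩
  · have := hYmin X hX
    omega
  · omega

/-- Replacing a `2`-atom `M` by the negated complement of `M + S` does not increase
`#(X + S) - #X`; hence `M` is no larger than that complement. -/
lemma IsTwoAtom.dual {S M : Finset G} (h : IsTwoAtom S M) :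
    #M + #(M + S) ≤ Fintype.card G := by
  have hc : #(-(M + S)ᶜ) = Fintype.card G - #(M + S) := by
    rw [Finset.card_neg, Finset.card_compl]
  have hsub : -(M + S)ᶜ + S ⊆ -(Mᶜ) := by
    intro z hz
    obtain ⟨y, hy, s, hs, rfl⟩ := Finset.mem_add.1 hz
    rw [Finset.mem_neg', Finset.mem_compl] at hy ⊢
    intro hm
    apply hy
    have : -y = -(y + s) + s := by abel
    rw [this]
    exact Finset.add_mem_add hm hs
  have hle := Finset.card_le_card hsub
  rw [Finset.card_neg, Finset.card_compl] at hle
  have h1 := h.adm.1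
  have h2 := h.adm.2
  have h3 : #M ≤ Fintype.card G := Finset.card_le_univ M
  have := h.small (-(M + S)ᶜ) ⟨by omega, by omega⟩ (by omega)
  omega

/-- Submodularity of `X ↦ #(X + S) - #X`: a translate of a `2`-atom meeting it in two
elements is equal to it. -/
lemma IsTwoAtom.inter {S M : Finset G} (h : IsTwoAtom S M) {a : G}
    (ha : 2 ≤ #(M ∩ (a +ᵥ M))) : a +ᵥ M = M := by
  have hd := h.dual
  have hF : (a +ᵥ M) + S = a +ᵥ (M + S) := by
    rw [vadd_add_assoc]
  have hcF : #(a +ᵥ M) = #M := Finset.card_vadd_finset _ _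
  have hcFS : #((a +ᵥ M) + S) = #(M + S) := by rw [hF, Finset.card_vadd_finset]
  have e1 := Finset.card_union_add_card_inter M (a +ᵥ M)
  have e2 := Finset.card_union_add_card_inter (M + S) ((a +ᵥ M) + S)
  have hU : (M ∪ (a +ᵥ M)) + S = (M + S) ∪ ((a +ᵥ M) + S) := Finset.union_add
  have hI : (M ∩ (a +ᵥ M)) + S ⊆ (M + S) ∩ ((a +ᵥ M) + S) := Finset.inter_add_subset
  have hIc := Finset.card_le_card hI
  have hI2 : #((M + S) ∩ ((a +ᵥ M) + S)) ≤ #(M + S) := Finset.card_le_card Finset.inter_subset_left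
  have h1 := h.adm.1
  have h2 := h.adm.2
  have aI : Adm S (M ∩ (a +ᵥ M)) := ⟨ha, by omega⟩
  have mI := h.min _ aI
  have hUS : #((M ∪ (a +ᵥ M)) + S) = #((M + S) ∪ ((a +ᵥ M) + S)) := by rw [hU]
  have aU : Adm S (M ∪ (a +ᵥ M)) := ⟨by omega, by omega⟩
  have mU := h.min _ aU
  have := h.small _ aI (by omega)
  have hMI : M ∩ (a +ᵥ M) = M := Finset.eq_of_subset_of_card_le Finset.inter_subset_left this
  have hsub : M ⊆ a +ᵥ M := Finset.inter_eq_left.1 hMI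
  exact (Finset.eq_of_subset_of_card_le hsub hcF.le).symm

/-- By `IsTwoAtom.inter`, either no nonzero translate of `M` meets `M` twice, or `M` is invariant
under a nonzero `a`; then all its translates by differences `y - x` meet it in `y` and `a + y`. -/
lemma IsTwoAtom.sidonLike_or_coset {S M : Finset G} (h : IsTwoAtom S M) :
    SidonLike M ∨ ∃ (H : AddSubgroup G) (x : G), H ≠ ⊥ ∧ M = x +ᵥ sf H := by
  by_cases hs : SidonLike M
  · exact Or.inl hs
  right
  simp only [SidonLike, not_forall, not_le] at hs
  obtain ⟨a, ha0, ha⟩ := hs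
  have haM := h.inter ha
  let H : AddSubgroup G := AddAction.stabilizer G M
  have hH : ∀ y, y ∈ H ↔ y +ᵥ M = M := fun y => AddAction.mem_stabilizer_iff
  obtain ⟨x, hx⟩ : M.Nonempty := Finset.card_pos.1 (by have := h.adm.1; omega)
  refine ⟨H, x, ?_, ?_⟩
  · intro hb
    have : a ∈ H := (hH a).2 haM
    rw [hb, AddSubgroup.mem_bot] at this
    exact ha0 this
  · ext y
    have key : ∀ z ∈ M, a + z ∈ M := fun z hz => by
      rw [← haM]; exact Finset.vadd_mem_vadd_finset hz
    rw [← Finset.neg_vadd_mem_iff, mem_sf, hH, vadd_eq_add]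
    constructor
    · intro hy
      apply h.inter
      have h1 : y ∈ M ∩ ((-x + y) +ᵥ M) := by
        refine Finset.mem_inter.2 ⟨hy, ?_⟩
        have : (-x + y) +ᵥ x ∈ (-x + y) +ᵥ M := Finset.vadd_mem_vadd_finset hx
        rwa [vadd_eq_add, add_right_comm, neg_add_cancel, zero_add] at this
      have h2 : a + y ∈ M ∩ ((-x + y) +ᵥ M) := by
        refine Finset.mem_inter.2 ⟨key y hy, ?_⟩
        have : a + y = (-x + y) +ᵥ (a + x) := by rw [vadd_eq_add]; abel
        rw [this]
        exact Finset.vadd_mem_vadd_finset (key x hx)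
      exact Finset.one_lt_card.2 ⟨_, h1, _, h2, by simpa using ha0⟩
    · intro hy
      have : (-x + y) +ᵥ x ∈ (-x + y) +ᵥ M := Finset.vadd_mem_vadd_finset hx
      rwa [hy, vadd_eq_add, add_right_comm, neg_add_cancel, zero_add] at this

lemma SidonLike.two {M T : Finset G} (hM : SidonLike M) (hT : 2 ≤ #T) :
    2 * #M ≤ #(T + M) + 1 := by
  obtain ⟨x, hx, y, hy, hxy⟩ := Finset.one_lt_card.1 hT
  have hsub : (x +ᵥ M) ∪ (y +ᵥ M) ⊆ T + M :=
    Finset.union_subset (Finset.vadd_finset_subset_add hx) (Finset.vadd_finset_subset_add hy)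
  have h1 := Finset.card_le_card hsub
  have h2 := Finset.card_union_add_card_inter (x +ᵥ M) (y +ᵥ M)
  have h3 : (x +ᵥ M) ∩ (y +ᵥ M) = x +ᵥ (M ∩ ((y - x) +ᵥ M)) := by
    rw [Finset.vadd_finset_inter, vadd_vadd, add_sub_cancel]
  have h4 := hM (y - x) (sub_ne_zero.2 hxy.symm)
  rw [h3, Finset.card_vadd_finset, Finset.card_vadd_finset, Finset.card_vadd_finset] at h2
  omega

lemma SidonLike.three {M T : Finset G} (hM : SidonLike M) (hT : 3 ≤ #T) :
    3 * #M ≤ #(T + M) + 3 := by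
  obtain ⟨x, y, z, hx, hy, hz, hxy, hxz, hyz⟩ := Finset.two_lt_card_iff.1 hT
  have hi : ∀ u v : G, u ≠ v → #((u +ᵥ M) ∩ (v +ᵥ M)) ≤ 1 := by
    intro u v huv
    have h3 : (u +ᵥ M) ∩ (v +ᵥ M) = u +ᵥ (M ∩ ((v - u) +ᵥ M)) := by
      rw [Finset.vadd_finset_inter, vadd_vadd, add_sub_cancel]
    rw [h3, Finset.card_vadd_finset]
    exact hM _ (sub_ne_zero.2 huv.symm)
  have hsub : ((x +ᵥ M) ∪ (y +ᵥ M)) ∪ (z +ᵥ M) ⊆ T + M :=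
    Finset.union_subset (Finset.union_subset (Finset.vadd_finset_subset_add hx)
      (Finset.vadd_finset_subset_add hy)) (Finset.vadd_finset_subset_add hz)
  have h1 := Finset.card_le_card hsub
  have h2 := Finset.card_union_add_card_inter (x +ᵥ M) (y +ᵥ M)
  have h3 := Finset.card_union_add_card_inter ((x +ᵥ M) ∪ (y +ᵥ M)) (z +ᵥ M)
  rw [Finset.union_inter_distrib_right] at h3
  have h4 := Finset.card_union_le ((x +ᵥ M) ∩ (z +ᵥ M)) ((y +ᵥ M) ∩ (z +ᵥ M))
  have h5 := hi x y hxy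
  have h6 := hi x z hxz
  have h7 := hi y z hyz
  simp only [Finset.card_vadd_finset] at h2 h3
  omega

/-- A generating Sidon-like set with at least three elements has the Vosper property: no
admissible `T` satisfies `#(T + M) < #T + #M`. The reason is that its own `2`-atom `N` would have
to be Sidon-like, which makes `N + M` too large, or a coset of a subgroup `H`; in the latter case
`M` has more than `#H` elements because it meets two cosets, and at most `#H` because two
translates of `M` inside `M + H` are almost disjoint. -/
lemma SidonLike.vosper {M T : Finset G} (hM : SidonLike M) (h3 : 3 ≤ #M) (hgen : Gen M)
    (hT : Adm M T) : #T + #M ≤ #(T + M) := by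
  by_contra hlt
  push Not at hlt
  obtain ⟨N, hN⟩ := exists_twoAtom hT
  have hmin := hN.min T hT
  have hN2 := hN.adm.1
  rcases hN.sidonLike_or_coset with hs | ⟨H, x, hH, rfl⟩
  · have a2 := hM.two hN2
    rcases Nat.lt_or_ge #N 3 with h | h
    · omega
    · have a3 := hM.three h
      have b3 := hs.three h3
      rw [add_comm M N] at b3
      omega
  · have a2 := hM.two hN2
    have hadm := hN.adm.2
    rw [vadd_add_assoc, Finset.card_vadd_finset] at a2 hmin hadm
    rw [Finset.card_vadd_finset] at hmin
    have hHtop : H ≠ ⊤ := by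
      rintro rfl
      obtain ⟨m, hm⟩ : M.Nonempty := Finset.card_pos.1 (by omega)
      have : sf (⊤ : AddSubgroup G) + M = univ := by
        refine Finset.eq_univ_of_forall fun z => ?_
        exact Finset.mem_add.2 ⟨z - m, by simp, m, hm, by abel⟩
      rw [this, Finset.card_univ] at hadm
      omega
    obtain ⟨c, hc⟩ : M.Nonempty := Finset.card_pos.1 (by omega)
    obtain ⟨b, hb, hbc⟩ : ∃ b ∈ M, b - c ∉ H := by
      by_contra! hall
      exact hHtop (hgen H ⟨c, hall⟩)
    have hdisj : Disjoint (c +ᵥ sf H) (b +ᵥ sf H) := by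
      rw [Finset.disjoint_left]
      intro z hz1 hz2
      rw [← Finset.neg_vadd_mem_iff, mem_sf, vadd_eq_add] at hz1 hz2
      apply hbc
      have : b - c = (-c + z) - (-b + z) := by abel
      rw [this]
      exact H.sub_mem hz1 hz2
    have hsub : (c +ᵥ sf H) ∪ (b +ᵥ sf H) ⊆ sf H + M := by
      rw [add_comm]
      exact Finset.union_subset (Finset.vadd_finset_subset_add hc)
        (Finset.vadd_finset_subset_add hb)
    have := Finset.card_le_card hsub
    rw [Finset.card_union_of_disjoint hdisj, Finset.card_vadd_finset,
      Finset.card_vadd_finset] at this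
    omega

end Atoms

/-! ### Structure of two-atoms -/

section Structure

variable {G : Type*} [AddCommGroup G] [Fintype G] [DecidableEq G]

lemma exists_pull (K : AddSubgroup G) (A : Finset G) (h : ∀ a ∈ A, a ∈ K) :
    ∃ A' : Finset K, A'.image K.subtype = A := by
  classical
  refine ⟨univ.filter (fun z : K => (z : G) ∈ A), ?_⟩
  ext a
  simp only [mem_image, mem_filter, mem_univ, true_and]
  constructor
  · rintro ⟨z, hz, rfl⟩; exact hz
  · intro ha; exact ⟨⟨a, h a ha⟩, ha, rfl⟩

lemma card_pull {K : AddSubgroup G} (A : Finset K) : #(A.image K.subtype) = #A :=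
  Finset.card_image_of_injective _ K.subtype_injective

/-- A set containing `0` does not lie in a coset of a proper subgroup of the subgroup that it
generates. -/
lemma gen_pull {M : Finset G} (h0 : 0 ∈ M) {M' : Finset (AddSubgroup.closure (M : Set G))}
    (hM' : M'.image (AddSubgroup.closure (M : Set G)).subtype = M) : Gen M' := by
  rintro L ⟨c, hc⟩
  have h0' : (0 : AddSubgroup.closure (M : Set G)) ∈ M' := by
    rw [← hM'] at h0
    obtain ⟨z, hz, hz0⟩ := Finset.mem_image.1 h0
    have : z = 0 := by
      apply (AddSubgroup.closure (M : Set G)).subtype_injective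
      rw [hz0, map_zero]
    rwa [this] at hz
  have hcL : c ∈ L := by simpa using hc 0 h0'
  have hle : AddSubgroup.closure (M : Set G) ≤ L.map (AddSubgroup.closure (M : Set G)).subtype := by
    rw [AddSubgroup.closure_le]
    intro m hm
    rw [Finset.mem_coe, ← hM'] at hm
    obtain ⟨z, hz, rfl⟩ := Finset.mem_image.1 hm
    refine ⟨z, ?_, rfl⟩
    have := L.add_mem (hc z hz) hcL
    simpa using this
  rw [eq_top_iff]
  rintro ⟨z, hz⟩ -
  obtain ⟨w, hw, hwz⟩ := hle hz
  have : w = ⟨z, hz⟩ := Subtype.ext hwz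
  rwa [← this]

/-- The Vosper property of a Sidon-like set `M` inside the subgroup it generates, for sets `T` in
a single coset of that subgroup. -/
lemma SidonLike.vosper_closure {M T : Finset G} (hM : SidonLike M) (h3 : 3 ≤ #M) (h0 : 0 ∈ M)
    (s : G) (hTs : ∀ t ∈ T, t - s ∈ AddSubgroup.closure (M : Set G)) (hT : 2 ≤ #T)
    (hTM : #(T + M) + 2 ≤ #(sf (AddSubgroup.closure (M : Set G)))) : #T + #M ≤ #(T + M) := by
  classical
  set K := AddSubgroup.closure (M : Set G) with hK
  obtain ⟨M', hM'⟩ := exists_pull K M (fun m hm => AddSubgroup.subset_closure hm)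
  obtain ⟨T', hT'⟩ := exists_pull K (-s +ᵥ T) (by
    intro t ht
    obtain ⟨u, hu, rfl⟩ := Finset.mem_vadd_finset.1 ht
    have := hTs u hu
    rwa [sub_eq_neg_add] at this)
  have cM : #M' = #M := by rw [← hM', card_pull]
  have cT : #T' = #T := by rw [← card_pull T', hT', Finset.card_vadd_finset]
  have cTM : #(T' + M') = #(T + M) := by
    rw [← card_pull (T' + M'), Finset.image_add, hT', hM', vadd_add_assoc,
      Finset.card_vadd_finset]
  have hS' : SidonLike M' := by
    intro a ha
    have ha' : (a : G) ≠ 0 := by simpa using ha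
    refine le_trans ?_ (hM a ha')
    rw [← card_pull (M' ∩ (a +ᵥ M'))]
    apply Finset.card_le_card
    intro z hz
    obtain ⟨w, hw, rfl⟩ := Finset.mem_image.1 hz
    obtain ⟨hw1, hw2⟩ := Finset.mem_inter.1 hw
    obtain ⟨v, hv, rfl⟩ := Finset.mem_vadd_finset.1 hw2
    refine Finset.mem_inter.2 ⟨?_, ?_⟩
    · rw [← hM']; exact Finset.mem_image_of_mem _ hw1
    · refine Finset.mem_vadd_finset.2 ⟨v, ?_, rfl⟩
      rw [← hM']; exact Finset.mem_image_of_mem _ hv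
  have hg : Gen M' := gen_pull h0 hM'
  rw [card_sf, Nat.card_eq_fintype_card] at hTM
  have := hS'.vosper (T := T') (by omega) hg ⟨by omega, by omega⟩
  omega

lemma IsTwoAtom.vadd {S M : Finset G} (h : IsTwoAtom S M) (a : G) : IsTwoAtom S (a +ᵥ M) := by
  have h1 : #(a +ᵥ M) = #M := Finset.card_vadd_finset _ _
  have h2 : #((a +ᵥ M) + S) = #(M + S) := by rw [vadd_add_assoc, Finset.card_vadd_finset]
  obtain ⟨⟨h3, h3'⟩, h4, h5⟩ := h
  exact ⟨⟨by omega, by omega⟩, fun X hX => by rw [h1, h2]; exact h4 X hX,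
    fun X hX => by rw [h1, h2]; exact h5 X hX⟩

lemma SidonLike.vadd {M : Finset G} (h : SidonLike M) (b : G) : SidonLike (b +ᵥ M) := by
  intro a ha
  rw [vadd_comm a b M, ← Finset.vadd_finset_inter, Finset.card_vadd_finset]
  exact h a ha

/-- The heart of the structure theorem: a Sidon-like `2`-atom `M` has two elements. With `K` the
subgroup generated by `M`, split `S` along a coset of `K` that `M + S` does not fill: the rest of
`S` must be a union of `K`-cosets, and then a two-element subset of `M`, or `K` itself, contradicts
the minimality of `M`. -/
lemma IsTwoAtom.card_le_two_of_sidonLike {S M : Finset G} (h : IsTwoAtom S M) (hM : SidonLike M)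
    (h0 : 0 ∈ M) (hMS : #(M + S) < #M + #S) : #M ≤ 2 := by
  classical
  by_contra! h3
  set K := AddSubgroup.closure (M : Set G) with hK
  have hMK : ∀ m ∈ M, m ∈ K := fun m hm => AddSubgroup.subset_closure hm
  have hMsub : M ⊆ sf K := fun m hm => mem_sf.2 (hMK m hm)
  have cMK := Finset.card_le_card hMsub
  have hadm := h.adm.2
  have hdual := h.dual
  by_cases hfull : sf K + S ⊆ M + S
  · have heq : sf K + S = M + S := hfull.antisymm (Finset.add_subset_add_right hMsub)
    have := h.min (sf K) ⟨by omega, by rw [heq]; exact hadm⟩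
    rw [heq] at this
    have hMeq : M = sf K := Finset.eq_of_subset_of_card_le hMsub (by omega)
    obtain ⟨a, ha, ha0⟩ := Finset.exists_mem_ne (by omega : 1 < #M) 0
    have haK : a +ᵥ M = M := by
      refine Finset.eq_of_subset_of_card_le ?_ (Finset.card_vadd_finset _ _).ge
      intro z hz
      obtain ⟨w, hw, rfl⟩ := Finset.mem_vadd_finset.1 hz
      rw [hMeq, mem_sf, vadd_eq_add]
      exact K.add_mem (hMK a ha) (hMK w hw)
    have := hM a ha0
    rw [haK, Finset.inter_self] at this
    omega
  · obtain ⟨z, hz, hzM⟩ := Finset.not_subset.1 hfull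
    obtain ⟨κ, hκ, s, hs, rfl⟩ := Finset.mem_add.1 hz
    rw [mem_sf] at hκ
    set S1 := S.filter (fun u => u - s ∈ K) with hS1
    set S2 := S.filter (fun u => ¬ (u - s ∈ K)) with hS2
    have hSU : S = S1 ∪ S2 := (Finset.filter_union_filter_not_eq _ S).symm
    have cS : #S1 + #S2 = #S := Finset.card_filter_add_card_filter_not _
    have hm1 : ∀ z ∈ M + S1, z - s ∈ K := by
      intro z hz
      obtain ⟨m, hm, u, hu, rfl⟩ := Finset.mem_add.1 hz
      rw [add_sub_assoc]
      exact K.add_mem (hMK m hm) (Finset.mem_filter.1 hu).2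
    have hm2 : ∀ z ∈ M + S2, z - s ∉ K := by
      intro z hz hzK
      obtain ⟨m, hm, u, hu, rfl⟩ := Finset.mem_add.1 hz
      apply (Finset.mem_filter.1 hu).2
      rw [add_sub_assoc] at hzK
      exact (K.add_mem_cancel_left (hMK m hm)).1 hzK
    have hdisj : Disjoint (M + S1) (M + S2) :=
      Finset.disjoint_left.2 fun z h1 h2 => hm2 z h2 (hm1 z h1)
    have cMS : #(M + S) = #(M + S1) + #(M + S2) := by
      rw [← Finset.card_union_of_disjoint hdisj, ← Finset.add_union, ← hSU]
    have hsub2 : S2 ⊆ M + S2 := fun u hu => Finset.mem_add.2 ⟨0, h0, u, hu, zero_add u⟩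
    have cS2 := Finset.card_le_card hsub2
    have hs1 : s ∈ S1 := Finset.mem_filter.2 ⟨hs, by simp [K.zero_mem]⟩
    have hzM1 : κ + s ∉ M + S1 := fun hc =>
      hzM (Finset.add_subset_add_left (Finset.filter_subset _ _) hc)
    have cM1 : #(M + S1) + 1 ≤ #(sf K) := by
      rw [← Finset.card_insert_of_notMem hzM1, ← Finset.card_vadd_finset s (sf K)]
      apply Finset.card_le_card
      intro y hy
      rw [← Finset.neg_vadd_mem_iff, mem_sf, vadd_eq_add, neg_add_eq_sub]
      rcases Finset.mem_insert.1 hy with rfl | hy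
      · simpa using hκ
      · exact hm1 y hy
    have cpig : #M + #S1 ≤ #(sf K) := by
      have hd : Disjoint ((κ + s) +ᵥ (-M)) S1 := by
        rw [Finset.disjoint_left]
        intro y hy hy1
        obtain ⟨w, hw, rfl⟩ := Finset.mem_vadd_finset.1 hy
        apply hzM1
        refine Finset.mem_add.2 ⟨-w, Finset.mem_neg'.1 hw, _, hy1, ?_⟩
        rw [vadd_eq_add]; abel
      rw [← Finset.card_neg M, ← Finset.card_vadd_finset (κ + s) (-M),
        ← Finset.card_union_of_disjoint hd, ← Finset.card_vadd_finset s (sf K)]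
      apply Finset.card_le_card
      intro y hy
      rw [← Finset.neg_vadd_mem_iff, mem_sf, vadd_eq_add, neg_add_eq_sub]
      rcases Finset.mem_union.1 hy with hy | hy
      · obtain ⟨w, hw, rfl⟩ := Finset.mem_vadd_finset.1 hy
        have : ((κ + s) +ᵥ w) - s = κ - (-w) := by rw [vadd_eq_add]; abel
        rw [this]
        exact K.sub_mem hκ (hMK _ (Finset.mem_neg'.1 hw))
      · exact (Finset.mem_filter.1 hy).2
    have cS1pos : 0 < #S1 := Finset.card_pos.2 ⟨s, hs1⟩
    rcases Nat.lt_or_ge #S1 2 with hlt | hge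
    · -- If `S1` is a singleton, a two-element subset of `M` is a smaller minimizer.
      obtain ⟨u, hu⟩ := Finset.card_eq_one.1 (show #S1 = 1 by omega)
      have c1 : #(M + S1) = #M := by rw [hu, Finset.card_add_singleton]
      obtain ⟨M', hM', cM'⟩ := Finset.exists_subset_card_eq (show 2 ≤ #M by omega)
      have hle : #(M' + S) ≤ 2 + #(M + S2) := by
        rw [hSU, Finset.add_union]
        refine (Finset.card_union_le _ _).trans ?_
        have e1 : #(M' + S1) = 2 := by rw [hu, Finset.card_add_singleton, cM']
        have e2 := Finset.card_le_card (Finset.add_subset_add_right (t := S2) hM')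
        omega
      have hle2 := Finset.card_le_card (Finset.add_subset_add_right (t := S) hM')
      have := h.small M' ⟨by omega, by omega⟩ (by omega)
      omega
    · -- Otherwise `M + S1` fills its coset up to one element, `S2` is `K`-periodic, and `K` has a
      -- smaller value of `#(X + S) - #X` than `M`.
      have hK1 : #(sf K) < #(S1 + M) + 2 := by
        by_contra! hcon
        have := hM.vosper_closure h3 h0 s (T := S1) (fun t ht => (Finset.mem_filter.1 ht).2)
          hge hcon
        rw [add_comm S1 M] at this
        omega
      rw [add_comm S1 M] at hK1
      have hS2eq : M + S2 = S2 := (Finset.eq_of_subset_of_card_le hsub2 (by omega)).symm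
      have hstab : K ≤ AddAction.stabilizer G S2 := by
        rw [hK, AddSubgroup.closure_le]
        intro m hm
        rw [SetLike.mem_coe, AddAction.mem_stabilizer_iff]
        refine Finset.eq_of_subset_of_card_le ?_ (Finset.card_vadd_finset _ _).ge
        nth_rewrite 2 [← hS2eq]
        exact Finset.vadd_finset_subset_add hm
      have hKS : sf K + S ⊆ (s +ᵥ sf K) ∪ S2 := by
        intro y hy
        obtain ⟨c, hc, u, hu, rfl⟩ := Finset.mem_add.1 hy
        rw [mem_sf] at hc
        rw [hSU] at hu
        rcases Finset.mem_union.1 hu with hu | hu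
        · refine Finset.mem_union_left _ ?_
          rw [← Finset.neg_vadd_mem_iff, mem_sf, vadd_eq_add, neg_add_eq_sub, add_sub_assoc]
          exact K.add_mem hc (Finset.mem_filter.1 hu).2
        · refine Finset.mem_union_right _ ?_
          have := AddAction.mem_stabilizer_iff.1 (hstab hc)
          rw [← this]
          exact Finset.vadd_mem_vadd_finset hu
      have cKS := (Finset.card_le_card hKS).trans (Finset.card_union_le _ _)
      rw [Finset.card_vadd_finset] at cKS
      have := h.min (sf K) ⟨by omega, by omega⟩
      omega

/-- If `S` fails the Vosper property, this is witnessed by a two-element set or by a coset of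
a nontrivial subgroup. -/
theorem exists_pair_or_coset {S X : Finset G} (hX : Adm S X) (hXS : #(X + S) < #X + #S) :
    ∃ M, Adm S M ∧ #(M + S) < #M + #S ∧
      (#M = 2 ∨ ∃ (H : AddSubgroup G) (x : G), H ≠ ⊥ ∧ M = x +ᵥ sf H) := by
  obtain ⟨M, hM⟩ := exists_twoAtom hX
  have hMS : #(M + S) < #M + #S := by
    have := hM.min X hX
    omega
  refine ⟨M, hM.adm, hMS, ?_⟩
  rcases hM.sidonLike_or_coset with hs | hc
  · left
    obtain ⟨x, hx⟩ : M.Nonempty := Finset.card_pos.1 (by have := hM.adm.1; omega)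
    have := (hM.vadd (-x)).card_le_two_of_sidonLike (hs.vadd (-x))
      (Finset.mem_vadd_finset.2 ⟨x, hx, by simp⟩)
      (by rwa [vadd_add_assoc, Finset.card_vadd_finset, Finset.card_vadd_finset])
    rw [Finset.card_vadd_finset] at this
    have := hM.adm.1
    omega
  · exact Or.inr hc

end Structure

/-! ### Aperiodic difference sets `kB - lB` -/

section Aperiodic

variable {G : Type*} [AddCommGroup G] [Fintype G] [DecidableEq G]

/-- `S` has trivial stabilizer. -/
def Aper (S : Finset G) : Prop := ∀ g : G, g +ᵥ S ⊆ S → g = 0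

/-- If `B` misses fewer than `#H` elements of `B + H`, then the traces of `B` on two different
`H`-cosets can be matched along any injection of `H`. -/
lemma exists_match {B : Finset G} {H : AddSubgroup G} (hB : #(B + sf H) < #B + #(sf H))
    {a a' : G} (ha : a ∈ B) (ha' : a' ∈ B) (haa : a - a' ∉ H) (g : G → G)
    (hg : ∀ h ∈ H, g h ∈ H) (hginj : Function.Injective g) :
    ∃ h ∈ H, a + h ∈ B ∧ a' + g h ∈ B := by
  by_contra! hcon
  have hsub : B ⊆ B + sf H := fun b hb =>
    Finset.mem_add.2 ⟨b, hb, 0, mem_sf.2 H.zero_mem, add_zero b⟩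
  have hle : #(sf H) ≤ #((B + sf H) \ B) := by
    apply Finset.card_le_card_of_injOn (fun h => if a + h ∈ B then a' + g h else a + h)
    · intro h hh
      rw [Finset.mem_coe, mem_sf] at hh
      rw [Finset.mem_coe, Finset.mem_sdiff]
      dsimp only
      split_ifs with hc
      · exact ⟨Finset.add_mem_add ha' (mem_sf.2 (hg h hh)), hcon h hh hc⟩
      · exact ⟨Finset.add_mem_add ha (mem_sf.2 hh), hc⟩
    · have key : ∀ u ∈ H, ∀ v ∈ H, a' + g u ≠ a + v := by
        intro u hu v hv huv
        apply haa
        have : a - a' = g u - v := by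
          rw [sub_eq_sub_iff_add_eq_add, ← huv, add_comm]
        rw [this]
        exact H.sub_mem (hg u hu) hv
      intro u hu v hv huv
      rw [Finset.mem_coe, mem_sf] at hu hv
      dsimp only at huv
      split_ifs at huv
      · exact hginj (add_left_cancel huv)
      · exact absurd huv (key u hu v hv)
      · exact absurd huv.symm (key v hv u hu)
      · exact add_left_cancel huv
  rw [Finset.card_sdiff_of_subset hsub] at hle
  have := Finset.card_le_card hsub
  omega

/-- A subgroup `H` with `#(B + H) < #B + #H` would be a period of `kB - lB`: a
representation `a + b - c + …` of an element involves two different `H`-cosets, after replacing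
`a + b - c` by `x + b' - x` with `x` in another coset if `a`, `b`, `c` lie in one coset; the two terms
from different cosets can then be modified so as to absorb any element of `H`. -/
lemma not_almost_periodic {B : Finset G} {k l : ℕ} (hk : 2 ≤ k) (hl : 1 ≤ l) (hgen : Gen B)
    (hS : Aper (foldSum k B - foldSum l B)) {H : AddSubgroup G} (hH : H ≠ ⊥) (hHt : H ≠ ⊤) :
    #B + #(sf H) ≤ #(B + sf H) := by
  by_contra! hB
  apply hH
  rw [AddSubgroup.eq_bot_iff_forall]
  intro h hh
  apply hS
  obtain ⟨k, rfl⟩ := Nat.exists_eq_add_of_le' hk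
  obtain ⟨l, rfl⟩ := Nat.exists_eq_add_of_le' hl
  intro z hz
  obtain ⟨w, hw, rfl⟩ := Finset.mem_vadd_finset.1 hz
  obtain ⟨p, hp, q, hq, rfl⟩ := Finset.mem_sub.1 hw
  obtain ⟨a, ha, p', hp', rfl⟩ := Finset.mem_add.1 (show p ∈ B + foldSum (k + 1) B from hp)
  obtain ⟨b, hb, r, hr, rfl⟩ := Finset.mem_add.1 (show p' ∈ B + foldSum k B from hp')
  obtain ⟨c, hc, s, hs, rfl⟩ := Finset.mem_add.1 (show q ∈ B + foldSum l B from hq)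
  have build : ∀ a' ∈ B, ∀ b' ∈ B, ∀ c' ∈ B,
      (a' + (b' + r)) - (c' + s) ∈ foldSum (k + 2) B - foldSum (l + 1) B := by
    intro a' ha' b' hb' c' hc'
    exact Finset.sub_mem_sub (Finset.add_mem_add ha' (Finset.add_mem_add hb' hr))
      (Finset.add_mem_add hc' hs)
  rw [vadd_eq_add]
  by_cases hab : a - b ∈ H
  · by_cases hac : a - c ∈ H
    · -- All of `a`, `b`, `c` lie in one coset: use `x + b' - x` with `x` from another coset.
      obtain ⟨x, hx, hxb⟩ : ∃ x ∈ B, x - b ∉ H := by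
        by_contra! hall
        exact hHt (hgen H ⟨b, hall⟩)
      obtain ⟨h1, hh1, e1, e2⟩ := exists_match hB hx hb hxb (fun u => (a - c) + h - u)
        (fun u hu => H.sub_mem (H.add_mem hac hh) hu) (sub_right_injective)
      have := build _ e1 _ e2 _ hx
      convert this using 1
      abel
    · obtain ⟨h1, hh1, e1, e2⟩ := exists_match hB ha hc hac (fun u => u - h)
        (fun u hu => H.sub_mem hu hh) (sub_left_injective)
      have := build _ e1 _ hb _ e2
      convert this using 1
      abel
  · obtain ⟨h1, hh1, e1, e2⟩ := exists_match hB ha hb hab (fun u => h - u)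
      (fun u hu => H.sub_mem hh hu) (sub_right_injective)
    have := build _ e1 _ e2 _ hc
    convert this using 1
    abel

lemma forall_add_mem_of_closed {Q : Set G} {x : G} (h : ∀ y ∈ Q, x + y ∈ Q) {y : G} (hy : y ∈ Q)
    {z : G} (hz : z ∈ AddSubgroup.zmultiples x) : y + z ∈ Q := by
  have : z ∈ AddSubmonoid.multiples x :=
    (isOfFinAddOrder_of_finite x).mem_multiples_iff_mem_zmultiples.2 hz
  obtain ⟨n, rfl⟩ := AddSubmonoid.mem_multiples_iff _ _ |>.1 this
  clear hz this
  induction n with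
  | zero => simpa using hy
  | succ n ih =>
    have := h _ ih
    rwa [succ_nsmul, ← add_assoc, add_comm]

/-- If translation by `x` adds at most the element `e` to `B`, then `B` is a union of cosets of
`⟨x⟩` apart from the coset of `e`. -/
lemma card_add_zmultiples_lt {B : Finset G} {x e : G} (he : e - x ∈ B)
    (hB : ∀ b ∈ B, x + b ∈ B ∨ x + b = e) :
    #(B + sf (AddSubgroup.zmultiples x)) < #B + #(sf (AddSubgroup.zmultiples x)) := by
  set H := AddSubgroup.zmultiples x with hH
  have hx : x ∈ H := AddSubgroup.mem_zmultiples x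
  have hsub : B + sf H ⊆ B ∪ (e +ᵥ sf H) := by
    intro z hz
    obtain ⟨b, hb, h, hh, rfl⟩ := Finset.mem_add.1 hz
    rw [mem_sf] at hh
    have := forall_add_mem_of_closed (Q := (↑(B ∪ (e +ᵥ sf H)) : Set G)) (x := x) (y := b) (z := h)
      ?_ (by simp [hb]) hh
    · exact_mod_cast this
    intro y hy
    rw [Finset.mem_coe, Finset.mem_union] at hy ⊢
    rcases hy with hy | hy
    · rcases hB y hy with h1 | h1
      · exact Or.inl h1
      · right
        rw [h1, ← Finset.neg_vadd_mem_iff, mem_sf, vadd_eq_add, neg_add_cancel]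
        exact H.zero_mem
    · right
      rw [← Finset.neg_vadd_mem_iff, mem_sf, vadd_eq_add] at hy ⊢
      rw [add_left_comm]
      exact H.add_mem hx hy
  have hmeet : 0 < #(B ∩ (e +ᵥ sf H)) := by
    refine Finset.card_pos.2 ⟨e - x, Finset.mem_inter.2 ⟨he, ?_⟩⟩
    rw [← Finset.neg_vadd_mem_iff, mem_sf, vadd_eq_add]
    have : -e + (e - x) = -x := by abel
    rw [this]
    exact H.neg_mem hx
  have h1 := Finset.card_le_card hsub
  have h2 := Finset.card_union_add_card_inter B (e +ᵥ sf H)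
  rw [Finset.card_vadd_finset] at h2
  omega

/-- When the step generates the group, a proper subset growing by at most one element is an
arithmetic progression (running downwards from `e - x`). -/
lemma exists_progression {B : Finset G} {x e : G} (hx : AddSubgroup.zmultiples x = ⊤)
    (he : e ∉ B) (hB : ∀ b ∈ B, x + b ∈ B ∨ x + b = e) :
    ∃ (y b : G) (j : ℕ), AddSubgroup.zmultiples y = ⊤ ∧ #B ≤ j ∧ ∀ i < j, b + i • y ∈ B := by
  classical
  have hex : ∃ j : ℕ, e - (j + 1) • x ∉ B := by
    refine ⟨Fintype.card G - 1, ?_⟩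
    rw [Nat.sub_add_cancel Fintype.card_pos, card_nsmul_eq_zero, sub_zero]
    exact he
  set j := Nat.find hex with hj
  have hjn : e - (j + 1) • x ∉ B := Nat.find_spec hex
  have hjm : ∀ i < j, e - (i + 1) • x ∈ B := fun i hi => by
    simpa using Nat.find_min hex hi
  refine ⟨-x, e - x, j, by rw [AddSubgroup.zmultiples_neg, hx], ?_, fun i hi => ?_⟩
  · by_contra! hlt
    set P := (Finset.range j).image (fun i : ℕ => e - (i + 1) • x) with hP
    have hPc : #P ≤ j := Finset.card_image_le.trans (by simp)
    obtain ⟨b, hb, hbP⟩ : ∃ b ∈ B, b ∉ P := by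
      by_contra! hall
      have := Finset.card_le_card (show B ⊆ P from hall)
      omega
    have hcl : ∀ y ∈ (↑(B \ P) : Set G), x + y ∈ (↑(B \ P) : Set G) := by
      intro y hy
      rw [Finset.mem_coe, Finset.mem_sdiff] at hy ⊢
      obtain ⟨hyB, hyP⟩ := hy
      have hval : ∀ i : ℕ, x + y = e - i • x → y = e - (i + 1) • x := by
        intro i hi
        rw [succ_nsmul, ← sub_sub, ← hi]
        abel
      have hyne : ∀ i < j + 1, y ≠ e - (i + 1) • x := by
        intro i hi hyi
        rcases Nat.lt_succ_iff_lt_or_eq.1 hi with h | h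
        · exact hyP (Finset.mem_image.2 ⟨i, Finset.mem_range.2 h, hyi.symm⟩)
        · rw [h] at hyi
          exact hjn (hyi ▸ hyB)
      refine ⟨?_, ?_⟩
      · rcases hB y hyB with h | h
        · exact h
        · exact absurd (hval 0 (by simpa using h)) (hyne 0 (by omega))
      · intro hc
        obtain ⟨i, hi, hie⟩ := Finset.mem_image.1 hc
        exact hyne (i + 1) (by have := Finset.mem_range.1 hi; omega) (hval (i + 1) hie.symm)
    have := forall_add_mem_of_closed hcl (y := b) (z := e - b)
      (by rw [Finset.mem_coe, Finset.mem_sdiff]; exact ⟨hb, hbP⟩) (by rw [hx]; trivial)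
    rw [add_sub_cancel, Finset.mem_coe, Finset.mem_sdiff] at this
    exact he this.1
  · have := hjm i hi
    rw [succ_nsmul'] at this
    convert this using 1
    rw [smul_neg]; abel

lemma card_add_card_le_of_notMem {X B : Finset G} {t : G} (h : t ∉ X + B) :
    #X + #B ≤ Fintype.card G := by
  have hd : Disjoint X (t +ᵥ (-B)) := by
    rw [Finset.disjoint_left]
    intro y hy hy1
    obtain ⟨w, hw, rfl⟩ := Finset.mem_vadd_finset.1 hy1
    apply h
    refine Finset.mem_add.2 ⟨_, hy, -w, Finset.mem_neg'.1 hw, ?_⟩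
    rw [vadd_eq_add]; abel
  rw [← Finset.card_neg B, ← Finset.card_vadd_finset t (-B), ← Finset.card_union_of_disjoint hd]
  exact Finset.card_le_univ _

lemma foldSum_nonempty {B : Finset G} (hB : B.Nonempty) (k : ℕ) : (foldSum k B).Nonempty := by
  induction k with
  | zero => exact Finset.singleton_nonempty 0
  | succ k ih => exact hB.add ih

/-- If `B` has the Vosper property, every summand of `kB - lB` contributes `#B` elements. The last
summand is accounted for by `card_add_card_le_of_notMem`. -/
lemma card_of_vosper {B : Finset G} (hB : 2 ≤ #B)
    (hV : ∀ X : Finset G, Adm B X → #X + #B ≤ #(X + B)) {k l : ℕ} {t : G}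
    (ht : t ∉ foldSum (k + 2) B - foldSum l B) : (k + 2 + l) * #B ≤ Fintype.card G := by
  have hBne : B.Nonempty := Finset.card_pos.1 (by omega)
  -- The lower bound `c * #B`, valid unless the set misses at most one element.
  let Q : ℕ → Finset G → Prop := fun c X =>
    2 ≤ #X ∧ (Fintype.card G ≤ #X + 1 ∨ c * #B ≤ #X)
  have step : ∀ c X, Q c X → Q (c + 1) (X + B) := by
    rintro c X ⟨h2, h⟩
    have hle : #X ≤ #(X + B) := Finset.card_le_card_add_right hBne
    refine ⟨by omega, ?_⟩
    by_cases hadm : Adm B X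
    · have := hV X hadm
      rcases h with h | h
      · left; omega
      · right; rw [add_one_mul]; omega
    · left
      by_contra! hc
      exact hadm ⟨h2, by omega⟩
  have hneg : ∀ c X, Q c X → Q c (-X) := by
    rintro c X ⟨h2, h⟩
    exact ⟨by rwa [Finset.card_neg], by rwa [Finset.card_neg]⟩
  have hbase : ∀ i, Q (i + 1) (foldSum (i + 1) B) := by
    have hneg' : Q 1 B := ⟨hB, Or.inr (by simp)⟩
    intro i
    induction i with
    | zero =>
      have : foldSum (0 + 1) B = B := by
        rw [foldSum, foldSum, Finset.singleton_zero, add_zero]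
      rw [this]
      exact hneg'
    | succ i ih =>
      have : foldSum (i + 1 + 1) B = foldSum (i + 1) B + B := by
        rw [add_comm (foldSum (i + 1) B)]; rfl
      rw [this]
      exact step _ _ ih
  have hall : ∀ l, Q (k + 1 + l) (foldSum (k + 1) B - foldSum l B) := by
    intro l
    induction l with
    | zero => simpa [foldSum] using hbase k
    | succ l ih =>
      have e : foldSum (k + 1) B - foldSum (l + 1) B
          = -(-(foldSum (k + 1) B - foldSum l B) + B) := by
        rw [show foldSum (l + 1) B = B + foldSum l B from rfl, neg_add, neg_neg,
          ← sub_eq_add_neg, sub_sub, add_comm B]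
      rw [e]
      exact hneg _ _ (step _ _ (hneg _ _ ih))
  have hlast := hall l
  have hS : foldSum (k + 2) B - foldSum l B = (foldSum (k + 1) B - foldSum l B) + B := by
    rw [show foldSum (k + 2) B = B + foldSum (k + 1) B from rfl, add_sub_assoc, add_comm]
  rw [hS] at ht
  have hc := card_add_card_le_of_notMem ht
  rcases hlast.2 with h | h
  · omega
  · have : (k + 2 + l) * #B = (k + 1 + l) * #B + #B := by ring
    omega

lemma two_mul_card_le {B : Finset G} {k l : ℕ} {t : G} (hk : 1 ≤ k) (hl : 1 ≤ l)
    (ht : t ∉ foldSum k B - foldSum l B) : 2 * #B ≤ Fintype.card G := by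
  rcases B.eq_empty_or_nonempty with rfl | hB
  · simp
  rw [sub_eq_add_neg] at ht
  have h := card_add_card_le_of_notMem ht
  rw [Finset.card_neg] at h
  have hge : ∀ i, 1 ≤ i → #B ≤ #(foldSum i B) := by
    intro i hi
    obtain ⟨i, rfl⟩ := Nat.exists_eq_add_of_le' hi
    exact Finset.card_le_card_add_right (foldSum_nonempty hB i)
  have := hge k hk
  have := hge l hl
  omega

/-- The critical pair dichotomy for `kB - lB`: if `B` fails the Vosper property, the failure is
witnessed by a coset, which `not_almost_periodic` excludes, or by a pair `{u, v}`, and then `B` is a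
progression with difference `±(v - u)`. -/
theorem card_le_or_progression {B : Finset G} {k l : ℕ} (hk : 2 ≤ k) (hl : 1 ≤ l) (hB : 2 ≤ #B)
    (hgen : Gen B) (hS : Aper (foldSum k B - foldSum l B)) {t : G}
    (ht : t ∉ foldSum k B - foldSum l B) :
    (k + l) * #B ≤ Fintype.card G ∨
    ∃ (y b : G) (j : ℕ), AddSubgroup.zmultiples y = ⊤ ∧ #B ≤ j ∧ ∀ i < j, b + i • y ∈ B := by
  have h2B := two_mul_card_le (by omega) hl ht
  by_cases hV : ∀ X : Finset G, Adm B X → #X + #B ≤ #(X + B)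
  · left
    obtain ⟨k, rfl⟩ := Nat.exists_eq_add_of_le' hk
    exact card_of_vosper hB hV ht
  right
  push Not at hV
  obtain ⟨X, hX, hXB⟩ := hV
  obtain ⟨M, hM, hMB, h2 | ⟨H, x, hH, rfl⟩⟩ := exists_pair_or_coset hX hXB
  · obtain ⟨u, v, huv, rfl⟩ := Finset.card_eq_two.1 h2
    set x := v - u with hx
    have hx0 : x ≠ 0 := sub_ne_zero.2 huv.symm
    have hMe : ({u, v} : Finset G) + B = u +ᵥ (B ∪ (x +ᵥ B)) := by
      rw [Finset.vadd_finset_union, vadd_vadd, hx, add_sub_cancel,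
        show ({u, v} : Finset G) = {u} ∪ {v} from rfl, Finset.union_add,
        Finset.singleton_add, Finset.singleton_add]
    rw [hMe, Finset.card_vadd_finset, h2] at hMB
    have hE : #((x +ᵥ B) \ B) ≤ 1 := by
      have := Finset.card_union_add_card_inter B (x +ᵥ B)
      have h3 := Finset.card_sdiff_add_card (x +ᵥ B) B
      rw [Finset.union_comm] at h3
      omega
    obtain ⟨e, he, hBe⟩ : ∃ e, e - x ∈ B ∧ ∀ b ∈ B, x + b ∈ B ∨ x + b = e := by
      rcases ((x +ᵥ B) \ B).eq_empty_or_nonempty with hem | ⟨e, he⟩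
      · obtain ⟨b, hb⟩ : B.Nonempty := Finset.card_pos.1 (by omega)
        refine ⟨b + x, by simpa using hb, fun c hc => Or.inl ?_⟩
        exact Finset.sdiff_eq_empty_iff_subset.1 hem (Finset.vadd_mem_vadd_finset hc)
      · obtain ⟨he1, he2⟩ := Finset.mem_sdiff.1 he
        obtain ⟨b, hb, hbe⟩ := Finset.mem_vadd_finset.1 he1
        refine ⟨e, by rw [← hbe, vadd_eq_add]; simpa using hb, fun c hc => ?_⟩
        by_cases h : x + c ∈ B
        · exact Or.inl h
        · exact Or.inr (Finset.card_le_one.1 hE _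
            (Finset.mem_sdiff.2 ⟨Finset.vadd_mem_vadd_finset hc, h⟩) _ he)
    have hlt := card_add_zmultiples_lt he hBe
    have htop : AddSubgroup.zmultiples x = ⊤ := by
      by_contra hne
      have := not_almost_periodic hk hl hgen hS
        (H := AddSubgroup.zmultiples x) (by simpa using hx0) hne
      omega
    refine exists_progression htop ?_ hBe
    intro heB
    have hcl : ∀ y ∈ (B : Set G), x + y ∈ (B : Set G) := by
      intro y hy
      rcases hBe y hy with h | h
      · exact h
      · rw [h]; exact heB
    have huniv : B = univ := Finset.eq_univ_of_forall fun z => by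
      have := forall_add_mem_of_closed hcl (y := e) heB (z := z - e) (by rw [htop]; trivial)
      simpa using this
    rw [huniv, Finset.card_univ] at h2B hB
    omega
  · exfalso
    have hadm := hM.2
    rw [vadd_add_assoc, Finset.card_vadd_finset, add_comm] at hMB hadm
    rw [Finset.card_vadd_finset] at hMB
    have hHt : H ≠ ⊤ := by
      rintro rfl
      obtain ⟨m, hm⟩ : B.Nonempty := Finset.card_pos.1 (by omega)
      have : sf (⊤ : AddSubgroup G) + B = univ := by
        refine Finset.eq_univ_of_forall fun z => ?_
        exact Finset.mem_add.2 ⟨z - m, by simp, m, hm, by abel⟩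
      rw [add_comm 2, this, Finset.card_univ] at hadm
      omega
    have := not_almost_periodic hk hl hgen hS hH hHt
    omega

end Aperiodic

/-! ### Arithmetic of the bound -/

/-- The `d`-th term of the maximum, without the factor `n / d`. -/
def gam (d k l : ℕ) : ℕ :=
  cdiv (d - (Nat.gcd d (k - l) -
    (l * cdiv (d - Nat.gcd d (k - l)) (k + l)) % Nat.gcd d (k - l))) (k + l)

lemma lt_cdiv_iff {a b t : ℕ} (hb : 0 < b) : t < cdiv a b ↔ b * t < a := by
  rw [cdiv, ← Nat.add_one_le_iff, Nat.le_div_iff_mul_le hb, add_one_mul, mul_comm b t]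
  omega

/-- The right-hand side is the condition for some `c` with `1 ≤ c ≤ d - 1 - (k + l) t` to satisfy
`c ≡ -l t` modulo `gcd d (k - l)`. -/
lemma lt_gam_iff {d k l t : ℕ} (hd : 0 < d) (hkl : l < k) :
    t < gam d k l ↔ (k + l) * t + Nat.gcd d (k - l) + 1 ≤ d + (l * t) % Nat.gcd d (k - l) := by
  rw [gam, lt_cdiv_iff (by omega)]
  set δ := Nat.gcd d (k - l) with hδ
  have hδ0 : 0 < δ := Nat.gcd_pos_of_pos_left _ hd
  have hδd : δ ≤ d := Nat.gcd_le_left _ hd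
  have hδk : δ ≤ k - l := Nat.gcd_le_right _ (by omega)
  set f := cdiv (d - δ) (k + l) with hf
  have hft : ∀ t, t < f ↔ (k + l) * t < d - δ := fun t => lt_cdiv_iff (by omega)
  have hr := Nat.mod_lt (l * f) hδ0
  have hr' := Nat.mod_lt (l * t) hδ0
  rcases lt_trichotomy t f with h | h | h
  · have := (hft t).1 h
    omega
  · rw [h]
    omega
  · have h1 : ¬ (k + l) * f < d - δ := fun hc => lt_irrefl f ((hft f).2 hc)
    have h2 : (k + l) * (f + 1) ≤ (k + l) * t := Nat.mul_le_mul_left _ h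
    rw [mul_add_one] at h2
    omega

/-- If none of the `N + 1` consecutive integers from `C` on is a multiple of `d`, they all lie
strictly between two consecutive multiples of `d`. -/
lemma window {d C : ℤ} {N : ℕ} (hd : 0 < d) (h : ∀ I : ℕ, I ≤ N → ¬ d ∣ C + I) :
    1 ≤ C % d ∧ C % d + N < d := by
  have h1 := Int.emod_nonneg C hd.ne'
  have h2 := Int.emod_lt_of_pos C hd
  constructor
  · by_contra! hc
    exact h 0 (Nat.zero_le _) (Int.dvd_of_emod_eq_zero (by simp; omega))
  · by_contra! hc
    apply h (d - C % d).toNat (by omega)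
    rw [Int.toNat_of_nonneg (by omega)]
    have : C + (d - C % d) = d * (C / d + 1) := by
      have := Int.mul_ediv_add_emod C d
      linarith
    rw [this]
    exact dvd_mul_right _ _

section Sumsets

variable {G : Type*} [AddCommGroup G] [DecidableEq G]

lemma nsmul_mem_foldSum {A : Finset G} {a : G} (ha : a ∈ A) (k : ℕ) : k • a ∈ foldSum k A := by
  induction k with
  | zero => simp [foldSum]
  | succ k ih =>
    rw [succ_nsmul']
    exact Finset.add_mem_add ha ih

lemma foldSum_image {G' : Type*} [AddCommGroup G'] [DecidableEq G'] (φ : G →+ G') (A : Finset G)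
    (k : ℕ) : foldSum k (A.image φ) = (foldSum k A).image φ := by
  induction k with
  | zero => simp [foldSum]
  | succ k ih => rw [foldSum, foldSum, ih, Finset.image_add]

lemma foldSum_vadd (c : G) (A : Finset G) (k : ℕ) :
    foldSum k (c +ᵥ A) = (k • c) +ᵥ foldSum k A := by
  induction k with
  | zero => simp [foldSum]
  | succ k ih =>
    rw [foldSum, foldSum, ih, vadd_add_assoc, add_comm A, ← vadd_add_assoc,
      vadd_add_assoc, vadd_add_assoc, vadd_vadd, succ_nsmul', add_comm A]

lemma progression_subset_foldSum {B : Finset G} {b y : G} {j : ℕ}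
    (h : ∀ i < j + 1, b + i • y ∈ B) (k : ℕ) :
    ∀ i ≤ k * j, k • b + i • y ∈ foldSum k B := by
  induction k with
  | zero => intro i hi; obtain rfl : i = 0 := by omega
            simp [foldSum]
  | succ k ih =>
    intro i hi
    rw [add_one_mul] at hi
    have h1 := h (min i j) (by omega)
    have h2 := ih (i - min i j) (by omega)
    have := Finset.add_mem_add h1 h2
    have e : (b + min i j • y) + (k • b + (i - min i j) • y) = (k + 1) • b + i • y := by
      have : i • y = min i j • y + (i - min i j) • y := by
        rw [← add_nsmul]; congr 1; omega
      rw [this, succ_nsmul]; abel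
    rw [e] at this
    exact this

lemma exists_of_mem_foldSum {B : Finset G} {b y : G} {j : ℕ}
    (h : ∀ x ∈ B, ∃ i ≤ j, x = b + i • y) (k : ℕ) :
    ∀ x ∈ foldSum k B, ∃ i ≤ k * j, x = k • b + i • y := by
  induction k with
  | zero => intro x hx; exact ⟨0, by simp, by simpa [foldSum] using hx⟩
  | succ k ih =>
    intro x hx
    obtain ⟨u, hu, v, hv, rfl⟩ := Finset.mem_add.1 (show x ∈ B + foldSum k B from hx)
    obtain ⟨i, hi, rfl⟩ := h u hu
    obtain ⟨i', hi', rfl⟩ := ih v hv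
    refine ⟨i + i', by rw [add_one_mul]; omega, ?_⟩
    rw [succ_nsmul, add_nsmul]; abel

lemma klSumFree_iff {A : Finset G} {k l : ℕ} :
    KLSumFree k l A ↔ (0 : G) ∉ foldSum k A - foldSum l A := by
  rw [KLSumFree, Finset.disjoint_left]
  constructor
  · intro h h0
    obtain ⟨p, hp, q, hq, hpq⟩ := Finset.mem_sub.1 h0
    rw [sub_eq_zero] at hpq
    exact h hp (hpq ▸ hq)
  · intro h p hp hq
    exact h (Finset.mem_sub.2 ⟨p, hp, p, hq, sub_self p⟩)

lemma diffs_vadd (c : G) (A : Finset G) (k l : ℕ) :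
    foldSum k (c +ᵥ A) - foldSum l (c +ᵥ A)
      = (k • c - l • c) +ᵥ (foldSum k A - foldSum l A) := by
  rw [foldSum_vadd, foldSum_vadd]
  ext z
  simp only [Finset.mem_sub, Finset.mem_vadd_finset, vadd_eq_add]
  constructor
  · rintro ⟨_, ⟨p, hp, rfl⟩, _, ⟨q, hq, rfl⟩, rfl⟩
    exact ⟨p - q, ⟨p, hp, q, hq, rfl⟩, by abel⟩
  · rintro ⟨_, ⟨p, hp, q, hq, rfl⟩, rfl⟩
    exact ⟨_, ⟨p, hp, rfl⟩, _, ⟨q, hq, rfl⟩, by abel⟩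

lemma diffs_image {G' : Type*} [AddCommGroup G'] [DecidableEq G'] (φ : G →+ G') (A : Finset G)
    (k l : ℕ) : foldSum k (A.image φ) - foldSum l (A.image φ)
      = (foldSum k A - foldSum l A).image φ := by
  rw [foldSum_image, foldSum_image, sub_eq_add_neg, sub_eq_add_neg, Finset.image_add]
  congr 1
  ext z
  simp only [Finset.mem_neg, Finset.mem_image]
  constructor
  · rintro ⟨_, ⟨p, hp, rfl⟩, rfl⟩
    exact ⟨-p, ⟨p, hp, rfl⟩, map_neg φ p⟩
  · rintro ⟨_, ⟨p, hp, rfl⟩, rfl⟩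
    exact ⟨φ p, ⟨p, hp, rfl⟩, (map_neg φ p).symm⟩

/-- If `kB - lB` misses `τ y` and `B` contains the progression `β y, (β + 1) y, …, (β + j) y` with
`y` generating the group, then a window of `(k + l) j + 1` consecutive integers contains no multiple
of the group order. -/
lemma progression_window [Fintype G] {B : Finset G} {y : G} {j k l : ℕ} {β τ : ℤ}
    (hy : AddSubgroup.zmultiples y = ⊤)
    (hB : ∀ i < j + 1, β • y + i • y ∈ B) (ht : τ • y ∉ foldSum k B - foldSum l B) :
    ∀ I : ℕ, I ≤ (k + l) * j →
      ¬ (Fintype.card G : ℤ) ∣ (((k : ℤ) - l) * β - τ - l * j) + I := by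
  intro I hI hdvd
  have hord : addOrderOf y = Fintype.card G := by
    rw [← Nat.card_zmultiples, hy, AddSubgroup.card_top, Nat.card_eq_fintype_card]
  rw [← hord, addOrderOf_dvd_iff_zsmul_eq_zero] at hdvd
  apply ht
  rw [add_mul] at hI
  -- `I - l j` is written as `i - i'` with `i ≤ k j` and `i' ≤ l j`.
  refine Finset.mem_sub.2 ⟨_, progression_subset_foldSum hB k (I - l * j) (by omega), _,
    progression_subset_foldSum hB l (l * j - I) (by omega), ?_⟩
  rw [← sub_eq_zero, ← hdvd]
  simp only [← natCast_zsmul, smul_smul, ← add_smul, ← sub_smul]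
  congr 1
  have : ((I - l * j : ℕ) : ℤ) - ((l * j - I : ℕ) : ℤ) = I - l * j := by
    rw [← Nat.cast_mul]; omega
  linarith

end Sumsets

/-! ### The upper bound -/

section Upper

variable {G : Type*} [AddCommGroup G] [Fintype G] [DecidableEq G]

lemma progression_card_lt {B : Finset G} {y b t : G} {j k l : ℕ}
    (hy : AddSubgroup.zmultiples y = ⊤) (hB : ∀ i < j + 1, b + i • y ∈ B)
    (ht : t ∉ foldSum k B - foldSum l B) : (k + l) * j + 1 < Fintype.card G := by
  obtain ⟨β, rfl⟩ := AddSubgroup.mem_zmultiples_iff.1 (by rw [hy]; trivial : b ∈ _)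
  obtain ⟨τ, rfl⟩ := AddSubgroup.mem_zmultiples_iff.1 (by rw [hy]; trivial : t ∈ _)
  have := window (by exact_mod_cast Fintype.card_pos) (progression_window hy hB ht)
  omega

/-- The residue in `progression_window` is congruent to `-l j` modulo `gcd (card G) (k - l)`, which
sharpens `progression_card_lt` to the exact bound. -/
lemma progression_lt_gam {B : Finset G} {y b : G} {j k l : ℕ} (hkl : l < k)
    (hy : AddSubgroup.zmultiples y = ⊤) (hB : ∀ i < j + 1, b + i • y ∈ B)
    (ht : (0 : G) ∉ foldSum k B - foldSum l B) : j < gam (Fintype.card G) k l := by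
  obtain ⟨β, rfl⟩ := AddSubgroup.mem_zmultiples_iff.1 (by rw [hy]; trivial : b ∈ _)
  have hcard : 0 < Fintype.card G := Fintype.card_pos
  rw [← zero_smul ℤ y] at ht
  obtain ⟨h1, h2⟩ := window (by exact_mod_cast hcard) (progression_window hy hB ht)
  rw [lt_gam_iff hcard hkl]
  set d := Fintype.card G
  set δ := Nat.gcd d (k - l) with hδ
  set C : ℤ := ((k : ℤ) - l) * β - 0 - l * j with hC
  have hδd : (δ : ℤ) ∣ d := by exact_mod_cast Nat.gcd_dvd_left d (k - l)
  have hδk : (δ : ℤ) ∣ (k : ℤ) - l := by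
    rw [← Nat.cast_sub hkl.le]
    exact_mod_cast Nat.gcd_dvd_right d (k - l)
  have hdvd : (δ : ℤ) ∣ C % d + ((l * j % δ : ℕ) : ℤ) := by
    have e1 : C % d = C - d * (C / d) := by
      have := Int.mul_ediv_add_emod C d
      linarith
    have e2 : ((l * j % δ : ℕ) : ℤ) = l * j - δ * ((l * j / δ : ℕ) : ℤ) := by
      have := Nat.mod_add_div (l * j) δ
      have h : ((l * j % δ : ℕ) : ℤ) + δ * ((l * j / δ : ℕ) : ℤ) = l * j := by exact_mod_cast this
      linarith
    have e3 : C % d + ((l * j % δ : ℕ) : ℤ)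
        = ((k : ℤ) - l) * β - d * (C / d) - δ * ((l * j / δ : ℕ) : ℤ) := by
      rw [e1, e2]; nth_rewrite 1 [hC]; ring
    rw [e3]
    exact dvd_sub (dvd_sub (hδk.mul_right _) (hδd.mul_right _)) (dvd_mul_right _ _)
  have hle := Int.le_of_dvd (by omega) hdvd
  omega

/-- The upper bound when `kA - lA` has trivial stabilizer. -/
theorem card_le_gam {A : Finset G} {k l : ℕ} (hl : 0 < l) (hkl : l < k) (hA : KLSumFree k l A)
    (hne : A.Nonempty) (hS : Aper (foldSum k A - foldSum l A)) :
    #A ≤ gam (Fintype.card G) k l := by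
  classical
  rw [klSumFree_iff] at hA
  have hcard : 0 < Fintype.card G := Fintype.card_pos
  obtain ⟨a, ha⟩ := hne
  have hδ2 : 2 * Nat.gcd (Fintype.card G) (k - l) ≤ Fintype.card G := by
    obtain ⟨m, hm⟩ := Nat.gcd_dvd_left (Fintype.card G) (k - l)
    have hm1 : m ≠ 1 := by
      rintro rfl
      rw [mul_one] at hm
      have hdvd : Fintype.card G ∣ k - l := by
        conv_lhs => rw [hm]
        exact Nat.gcd_dvd_right _ _
      apply hA
      refine Finset.mem_sub.2 ⟨k • a, nsmul_mem_foldSum ha k, l • a, nsmul_mem_foldSum ha l, ?_⟩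
      obtain ⟨c, hc⟩ := hdvd
      have hkc : k = l + c * Fintype.card G := by rw [mul_comm c]; omega
      rw [hkc, add_nsmul, mul_nsmul', card_nsmul_eq_zero, nsmul_zero, add_zero, sub_self]
    have hm0 : m ≠ 0 := by
      rintro rfl
      omega
    calc 2 * Nat.gcd (Fintype.card G) (k - l)
        ≤ m * Nat.gcd (Fintype.card G) (k - l) := Nat.mul_le_mul_right _ (by omega)
      _ = Fintype.card G := by rw [mul_comm]; exact hm.symm
  have hδ0 : 0 < Nat.gcd (Fintype.card G) (k - l) := Nat.gcd_pos_of_pos_left _ hcard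
  have hδk : Nat.gcd (Fintype.card G) (k - l) ≤ k - l := Nat.gcd_le_right _ (by omega)
  obtain ⟨u, hu⟩ : ∃ u, #A = u + 1 :=
    Nat.exists_eq_add_of_le' (Finset.card_pos.2 ⟨a, ha⟩)
  rw [hu, Nat.add_one_le_iff]
  rcases Nat.eq_zero_or_pos u with rfl | hu0
  · rw [lt_gam_iff hcard hkl]
    simp only [mul_zero, Nat.zero_mod]
    omega
  by_cases hgen : Gen A
  · rcases card_le_or_progression (by omega) hl (by omega) hgen hS hA with h | ⟨y, b, j, hy, hj, hB⟩
    · rw [lt_gam_iff hcard hkl]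
      rw [hu, mul_add_one] at h
      omega
    · obtain ⟨j, rfl⟩ := Nat.exists_eq_add_of_le' (show 1 ≤ j by omega)
      have := progression_lt_gam hkl hy hB hA
      omega
  · -- If `A` lies in a coset of a proper subgroup, it is bounded by half the group order.
    set M := -a +ᵥ A with hM
    have h0 : (0 : G) ∈ M := Finset.mem_vadd_finset.2 ⟨a, ha, by simp⟩
    have hmM : ∀ x ∈ A, x - a ∈ M := fun x hx =>
      Finset.mem_vadd_finset.2 ⟨x, hx, by rw [vadd_eq_add]; abel⟩
    set K := AddSubgroup.closure (M : Set G) with hK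
    have hKtop : K ≠ ⊤ := by
      intro htop
      apply hgen
      rintro L ⟨c, hc⟩
      rw [eq_top_iff, ← htop, hK, AddSubgroup.closure_le]
      intro m hm
      obtain ⟨x, hx, rfl⟩ := Finset.mem_vadd_finset.1 hm
      have : -a +ᵥ x = (x - c) - (a - c) := by rw [vadd_eq_add]; abel
      rw [this]
      exact L.sub_mem (hc x hx) (hc a ha)
    have h2K : 2 * Fintype.card K ≤ Fintype.card G := by
      have h1 : K.index ≠ 1 := fun h => hKtop (AddSubgroup.index_eq_one.1 h)
      have h2 := K.card_mul_index
      have h3 : K.index ≠ 0 := AddSubgroup.index_ne_zero_of_finite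
      rw [Nat.card_eq_fintype_card, Nat.card_eq_fintype_card] at h2
      calc 2 * Fintype.card K ≤ K.index * Fintype.card K := Nat.mul_le_mul_right _ (by omega)
        _ = Fintype.card G := by rw [mul_comm]; exact h2
    obtain ⟨B, hB⟩ := exists_pull K M (fun m hm => AddSubgroup.subset_closure hm)
    have cB : #B = u + 1 := by rw [← card_pull B, hB, hM, Finset.card_vadd_finset, hu]
    have hSB : (foldSum k B - foldSum l B).image K.subtype
        = (k • (-a) - l • (-a)) +ᵥ (foldSum k A - foldSum l A) := by
      rw [← diffs_image, hB, hM, diffs_vadd]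
    have hSBa : Aper (foldSum k B - foldSum l B) := by
      intro g hg
      have : (g : G) = 0 := by
        apply hS
        intro z hz
        obtain ⟨w, hw, rfl⟩ := Finset.mem_vadd_finset.1 hz
        have h1 : (k • (-a) - l • (-a)) + w ∈ (foldSum k B - foldSum l B).image K.subtype := by
          rw [hSB]
          exact Finset.mem_vadd_finset.2 ⟨w, hw, rfl⟩
        obtain ⟨v, hv, hvw⟩ := Finset.mem_image.1 h1
        have h2 : K.subtype (g +ᵥ v) ∈ (k • (-a) - l • (-a)) +ᵥ (foldSum k A - foldSum l A) := by
          rw [← hSB]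
          exact Finset.mem_image_of_mem _ (hg (Finset.mem_vadd_finset.2 ⟨v, hv, rfl⟩))
        obtain ⟨x, hx, hxe⟩ := Finset.mem_vadd_finset.1 h2
        rw [vadd_eq_add, vadd_eq_add, map_add, hvw, AddSubgroup.subtype_apply,
          add_left_comm, add_right_inj] at hxe
        rw [vadd_eq_add, ← hxe]
        exact hx
      exact_mod_cast this
    obtain ⟨t, ht⟩ : ∃ t, t ∉ foldSum k B - foldSum l B := by
      by_contra! hall
      obtain ⟨g, -, hg0⟩ := Finset.exists_mem_ne (show 1 < #B by omega) 0
      exact hg0 (hSBa g fun z _ => hall z)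
    have hbound : (k + l) * u + 1 ≤ Fintype.card K := by
      have hgB : Gen B := gen_pull h0 hB
      rcases card_le_or_progression (by omega) hl (by omega) hgB hSBa ht with
        h | ⟨y, b, j, hy, hj, hBj⟩
      · rw [cB, mul_add_one] at h
        omega
      · obtain ⟨j, rfl⟩ := Nat.exists_eq_add_of_le' (show 1 ≤ j by omega)
        have h1 := progression_card_lt hy hBj ht
        have h2 : (k + l) * u ≤ (k + l) * j := Nat.mul_le_mul_left _ (by omega)
        omega
    rw [lt_gam_iff hcard hkl]
    omega

end Upper

section Reduction

variable {G : Type*} [AddCommGroup G] [Fintype G] [DecidableEq G]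

lemma card_preimage {M : Type*} [AddCommGroup M] [Fintype M] [DecidableEq M] (f : G →+ M)
    (hf : Function.Surjective f) (B : Finset M) :
    #(univ.filter (fun z => f z ∈ B)) = #B * (Fintype.card G / Fintype.card M) := by
  have key : ∀ B : Finset M,
      #(univ.filter (fun z => f z ∈ B)) = #B * #(univ.filter (fun z => f z = 0)) := by
    intro B
    rw [Finset.card_eq_sum_card_fiberwise (f := f) (t := B) (fun z hz => by simpa using hz),
      Finset.sum_const_nat]
    intro b hb
    rw [← AddMonoidHom.card_fiber_eq_of_mem_range f (hf b) (hf 0), Finset.filter_filter]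
    congr 1
    ext z
    simp only [mem_filter, mem_univ, true_and]
    exact ⟨fun h => h.2, fun h => ⟨h ▸ hb, h⟩⟩
  have h1 := key univ
  simp only [mem_univ, Finset.filter_true, Finset.card_univ] at h1
  rw [key B, h1, Nat.mul_div_cancel_left _ Fintype.card_pos]

/-- The general upper bound follows from the case of trivial stabilizer by passing to the quotient
by the stabilizer of `kA - lA`. -/
theorem exists_card_le {A : Finset G} {k l : ℕ} (hl : 0 < l) (hkl : l < k)
    (hA : KLSumFree k l A) :
    ∃ d, d ∣ Fintype.card G ∧ #A ≤ gam d k l * (Fintype.card G / d) := by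
  classical
  rcases A.eq_empty_or_nonempty with rfl | hne
  · exact ⟨1, one_dvd _, by simp⟩
  set S := foldSum k A - foldSum l A with hSdef
  let H : AddSubgroup G := AddAction.stabilizer G S
  let φ : G →+ G ⧸ H := QuotientAddGroup.mk' H
  have hφ : Function.Surjective φ := QuotientAddGroup.mk'_surjective H
  let _ : Fintype (G ⧸ H) := Fintype.ofSurjective φ hφ
  have hsat : ∀ x y, φ x = φ y → y ∈ S → x ∈ S := by
    intro x y hxy hy
    have hmem : -y + x ∈ H := QuotientAddGroup.eq.1 hxy.symm
    have hst : (-y + x) +ᵥ S = S := AddAction.mem_stabilizer_iff.1 hmem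
    rw [← hst]
    exact Finset.mem_vadd_finset.2 ⟨y, hy, by rw [vadd_eq_add]; abel⟩
  have hS' := diffs_image φ A k l
  rw [← hSdef] at hS'
  have hA' : KLSumFree k l (A.image φ) := by
    rw [klSumFree_iff, hS']
    intro h0
    obtain ⟨s, hs, hs0⟩ := Finset.mem_image.1 h0
    exact klSumFree_iff.1 hA (hsat 0 s (by rw [hs0, map_zero]) hs)
  have hap : Aper (foldSum k (A.image φ) - foldSum l (A.image φ)) := by
    rw [hS']
    intro g hg
    obtain ⟨x, rfl⟩ := hφ g
    have hsub : x +ᵥ S ⊆ S := by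
      intro z hz
      obtain ⟨s, hs, rfl⟩ := Finset.mem_vadd_finset.1 hz
      obtain ⟨s', hs', he⟩ := Finset.mem_image.1
        (hg (Finset.mem_vadd_finset.2 ⟨φ s, Finset.mem_image_of_mem _ hs, rfl⟩))
      refine hsat _ s' ?_ hs'
      rw [he, vadd_eq_add, vadd_eq_add, map_add]
    have hst : x +ᵥ S = S :=
      Finset.eq_of_subset_of_card_le hsub (by rw [Finset.card_vadd_finset])
    exact (QuotientAddGroup.eq_zero_iff x).2 (AddAction.mem_stabilizer_iff.2 hst)
  have hle := card_le_gam hl hkl hA' (hne.image _) hap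
  refine ⟨Fintype.card (G ⧸ H), ?_, ?_⟩
  · rw [← Nat.card_eq_fintype_card, ← Nat.card_eq_fintype_card]
    exact AddSubgroup.card_quotient_dvd_card H
  · calc #A ≤ #(univ.filter (fun z => φ z ∈ A.image φ)) := by
          apply Finset.card_le_card
          intro a ha
          simpa using ⟨a, ha, rfl⟩
      _ = #(A.image φ) * (Fintype.card G / Fintype.card (G ⧸ H)) := card_preimage φ hφ _
      _ ≤ _ := Nat.mul_le_mul_right _ hle

end Reduction

/-! ### The lower bound -/

lemma foldSum_mono {G : Type*} [AddCommGroup G] [DecidableEq G] {A B : Finset G} (h : A ⊆ B)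
    (k : ℕ) : foldSum k A ⊆ foldSum k B := by
  induction k with
  | zero => exact subset_rfl
  | succ k ih => exact Finset.add_subset_add h ih

/-- An interval of length `gam d k l` in `ZMod d`, suitably placed, is `(k, l)`-sum-free. -/
lemma exists_interval {d k l : ℕ} (hd : 0 < d) (hl : 0 < l) (hkl : l < k) :
    ∃ B : Finset (ZMod d), KLSumFree k l B ∧ #B = gam d k l := by
  have : NeZero d := ⟨hd.ne'⟩
  rcases Nat.eq_zero_or_pos (gam d k l) with h0 | hpos
  · refine ⟨∅, ?_, by rw [h0]; rfl⟩
    obtain ⟨l, rfl⟩ := Nat.exists_eq_add_of_le' hl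
    rw [KLSumFree, show foldSum (l + 1) (∅ : Finset (ZMod d)) = ∅ + foldSum l ∅ from rfl,
      Finset.empty_add]
    exact Finset.disjoint_empty_right _
  obtain ⟨t, ht⟩ := Nat.exists_eq_add_of_le' hpos
  have hlt := (lt_gam_iff hd hkl).1 (show t < gam d k l by omega)
  set δ := Nat.gcd d (k - l) with hδ
  have hδ0 : 0 < δ := Nat.gcd_pos_of_pos_left _ hd
  have hr := Nat.mod_lt (l * t) hδ0
  -- `c` is the least positive integer with `c ≡ -l t` modulo `δ`.
  obtain ⟨c, hc⟩ : ∃ c, c + l * t % δ = δ := ⟨δ - l * t % δ, by omega⟩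
  have hdvd : δ ∣ c + l * t := by
    have := Nat.mod_add_div (l * t) δ
    refine ⟨1 + l * t / δ, ?_⟩
    rw [mul_add, mul_one]
    omega
  have hgcd : Int.gcd (d : ℤ) ((k - l : ℕ) : ℤ) ∣ c + l * t := by
    rw [Int.gcd_natCast_natCast]
    exact hdvd
  obtain ⟨x, β, hβ⟩ := Int.gcd_dvd_iff.1 hgcd
  push_cast [hkl.le] at hβ
  refine ⟨(range (t + 1)).image (fun i : ℕ => (β : ZMod d) + i • (1 : ZMod d)), ?_, ?_⟩
  · have hB : ∀ x ∈ (range (t + 1)).image (fun i : ℕ => (β : ZMod d) + i • (1 : ZMod d)),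
        ∃ i ≤ t, x = (β : ZMod d) + i • (1 : ZMod d) := by
      intro x hx
      obtain ⟨i, hi, rfl⟩ := Finset.mem_image.1 hx
      exact ⟨i, by rw [mem_range] at hi; omega, rfl⟩
    rw [KLSumFree, Finset.disjoint_left]
    intro z hz hz'
    obtain ⟨i, hi, rfl⟩ := exists_of_mem_foldSum hB k z hz
    obtain ⟨j, hj, he⟩ := exists_of_mem_foldSum hB l _ hz'
    have he' : (((c + l * t + i - j : ℤ)) : ZMod d) = 0 := by
      have h1 : (c + l * t + i - j : ℤ) = d * x + ((k * β + i) - (l * β + j)) := by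
        rw [hβ]; ring
      rw [h1]
      push_cast
      rw [ZMod.natCast_self, zero_mul, zero_add, sub_eq_zero]
      simpa [nsmul_eq_mul] using he
    rw [ZMod.intCast_zmod_eq_zero_iff_dvd] at he'
    rw [add_mul] at hlt
    have hi' : (i : ℤ) ≤ (k * t : ℕ) := by exact_mod_cast hi
    have hj' : (j : ℤ) ≤ (l * t : ℕ) := by exact_mod_cast hj
    rw [← Nat.cast_mul] at he'
    have := Int.le_of_dvd (by omega) he'
    omega
  · rw [Finset.card_image_of_injOn, card_range, ht]
    intro i hi j hj hij
    have htd : t < d := by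
      have : 1 * t ≤ (k + l) * t := Nat.mul_le_mul_right _ (by omega)
      omega
    simp only [coe_range, Set.mem_Iio] at hi hj
    simp only [nsmul_eq_mul, mul_one, add_right_inj] at hij
    rw [ZMod.natCast_eq_natCast_iff'] at hij
    rwa [Nat.mod_eq_of_lt (by omega), Nat.mod_eq_of_lt (by omega)] at hij

/-- The preimage of a sum-free interval of `ZMod d` is a sum-free subset of `ZMod n`. -/
lemma exists_sumFree {n d k l : ℕ} (hn : 0 < n) (hdn : d ∣ n) (hl : 0 < l) (hkl : l < k) :
    ∃ A : Finset (ZMod n), KLSumFree k l A ∧ #A = gam d k l * (n / d) := by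
  have : NeZero n := ⟨hn.ne'⟩
  have hd : 0 < d := Nat.pos_of_dvd_of_pos hdn hn
  have : NeZero d := ⟨hd.ne'⟩
  obtain ⟨B, hB, hcB⟩ := exists_interval hd hl hkl
  let φ : ZMod n →+ ZMod d := (ZMod.castHom hdn (ZMod d)).toAddMonoidHom
  have hφ : Function.Surjective φ := ZMod.castHom_surjective hdn
  refine ⟨univ.filter (fun z => φ z ∈ B), ?_, ?_⟩
  · have hsub : (univ.filter (fun z => φ z ∈ B)).image φ ⊆ B := by
      intro y hy
      obtain ⟨z, hz, rfl⟩ := Finset.mem_image.1 hy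
      exact (mem_filter.1 hz).2
    have hmem : ∀ h, ∀ z ∈ foldSum h (univ.filter (fun z => φ z ∈ B)), φ z ∈ foldSum h B := by
      intro h z hz
      apply foldSum_mono hsub h
      rw [foldSum_image]
      exact Finset.mem_image_of_mem _ hz
    rw [KLSumFree, Finset.disjoint_left] at hB ⊢
    exact fun z hz hz' => hB (hmem k z hz) (hmem l z hz')
  · rw [card_preimage φ hφ, hcB, ZMod.card, ZMod.card]

theorem stmt0 (n k l : ℕ) (hn : 0 < n) (hl : 0 < l) (hkl : l < k) :
    mu (ZMod n) k l =
      n.divisors.sup (fun d =>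
        cdiv (d - (Nat.gcd d (k - l) -
          (l * cdiv (d - Nat.gcd d (k - l)) (k + l)) % Nat.gcd d (k - l))) (k + l) * (n / d)) := by
  have : NeZero n := ⟨hn.ne'⟩
  change sSup {m | ∃ A : Finset (ZMod n), KLSumFree k l A ∧ A.card = m}
    = n.divisors.sup (fun d => gam d k l * (n / d))
  apply le_antisymm
  · obtain ⟨A, hA, -⟩ := exists_sumFree hn (one_dvd n) hl hkl
    refine csSup_le ⟨_, A, hA, rfl⟩ ?_
    rintro m ⟨A, hA, rfl⟩
    obtain ⟨d, hd, hle⟩ := exists_card_le hl hkl hA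
    rw [ZMod.card] at hd hle
    exact hle.trans (Finset.le_sup (f := fun d => gam d k l * (n / d))
      (Nat.mem_divisors.2 ⟨hd, hn.ne'⟩))
  · refine Finset.sup_le fun d hd => le_csSup ⟨n, ?_⟩ ?_
    · rintro m ⟨A, -, rfl⟩
      exact (Finset.card_le_univ A).trans (ZMod.card n).le
    · exact exists_sumFree hn (Nat.dvd_of_mem_divisors hd) hl hkl
end

section
/- For all positive integers n, k, and l with k > l, max over all positive divisors d of n of α(Z_d,{k,l}) · (n/d) equals max over all positive divisors d of n of γ(Z_d,{k,l}) · (n/d). -/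
/-!
The inequality `≥` holds divisor by divisor. For `≤`, let `{a + i b : i ≤ m}` be a
`(k,l)`-sum-free progression in `ZMod d` and write `b = u g` with `u` a unit and `g ∣ d`, so
that `b` has order `d / g` and `m + 1 ≤ d / g`.

* If `(k - l) a` is not a multiple of `g`, the residue of `a` modulo `g` is a `(k,l)`-sum-free
  singleton in `ZMod g`, and the divisor `g` contributes at least `n / g ≥ (m + 1) (n / d)`.
* Otherwise `(k - l) a = c b` with `0 ≤ c < d / g`. Sum-freeness forces `l m < c` and
  `c + k m < d / g`. Hence `0 < c g + i - j < d` whenever `i ≤ k m` and `j ≤ l m`, which says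
  exactly that `{a + i u : i ≤ m}`, with unit common difference `u`, is `(k,l)`-sum-free in
  `ZMod d` (`sumFree_unit_step`).
-/

open Finset Pointwise

lemma mem_foldSum_apSet (d : ℕ) (a b : ZMod d) (m h : ℕ) (x : ZMod d) :
    x ∈ foldSum h (apSet d a b (m + 1)) ↔ ∃ i ≤ h * m, x = h * a + i * b := by
  induction h generalizing x with
  | zero => simp [foldSum]
  | succ h ih =>
    simp only [foldSum, Finset.mem_add, ih]
    constructor
    · rintro ⟨y, hy, z, ⟨i, hi, rfl⟩, rfl⟩
      simp only [apSet, Finset.mem_image, Finset.mem_range] at hy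
      obtain ⟨j, hj, rfl⟩ := hy
      refine ⟨j + i, by rw [add_mul]; omega, ?_⟩
      simp only [nsmul_eq_mul]
      push_cast
      ring
    · rintro ⟨i, hi, rfl⟩
      rw [add_mul, one_mul] at hi
      refine ⟨a + (min i m) • b, ?_, h * a + ((i - min i m : ℕ) : ZMod d) * b,
        ⟨i - min i m, by omega, rfl⟩, ?_⟩
      · exact Finset.mem_image.2 ⟨min i m, Finset.mem_range.2 (by omega), rfl⟩
      · rw [Nat.cast_sub (min_le_left i m), nsmul_eq_mul]
        push_cast
        ring

lemma klSumFree_apSet_iff (d : ℕ) (a b : ZMod d) (m k l : ℕ) :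
    KLSumFree k l (apSet d a b (m + 1)) ↔
      ∀ i ≤ k * m, ∀ j ≤ l * m, (k : ZMod d) * a + i * b ≠ l * a + j * b := by
  simp only [KLSumFree, Finset.disjoint_left, mem_foldSum_apSet]
  constructor
  · intro h i hi j hj e
    exact h ⟨i, hi, rfl⟩ ⟨j, hj, e⟩
  · rintro h x ⟨i, hi, rfl⟩ ⟨j, hj, e⟩
    exact h i hi j hj e

lemma apSet_card_eq_iff (d : ℕ) (a b : ZMod d) (m : ℕ) :
    (apSet d a b m).card = m ↔
      ∀ i < m, ∀ j < m, (i : ZMod d) * b = j * b → i = j := by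
  have h := Finset.card_image_iff (s := Finset.range m) (f := fun i : ℕ => a + i • b)
  rw [Finset.card_range] at h
  rw [apSet, h]
  simp only [Set.InjOn, Finset.coe_range, Set.mem_Iio, add_right_inj, nsmul_eq_mul]

lemma apSet_card_le (d : ℕ) [NeZero d] (a b : ZMod d) (m : ℕ) : (apSet d a b m).card ≤ d := by
  simpa [ZMod.card] using Finset.card_le_univ (apSet d a b m)

lemma bddAbove_alpha (d k l : ℕ) [NeZero d] :
    BddAbove {m | ∃ a b : ZMod d, (apSet d a b m).card = m ∧ KLSumFree k l (apSet d a b m)} :=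
  ⟨d, by rintro m ⟨a, b, h, -⟩; rw [← h]; exact apSet_card_le d a b m⟩

lemma bddAbove_gamma (d k l : ℕ) [NeZero d] :
    BddAbove {m | ∃ a b : ZMod d, Nat.gcd (ZMod.val b) d = 1 ∧
      (apSet d a b m).card = m ∧ KLSumFree k l (apSet d a b m)} :=
  ⟨d, by rintro m ⟨a, b, -, h, -⟩; rw [← h]; exact apSet_card_le d a b m⟩

lemma gcd_val_of_isUnit {d : ℕ} {u : ZMod d} (hu : IsUnit u) : Nat.gcd u.val d = 1 := by
  obtain ⟨v, rfl⟩ := hu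
  exact ZMod.val_coe_unit_coprime v

/-- The progression has at most as many terms as the order `e` of its common difference. -/
lemma size_le_order (e g : ℕ) (he : 0 < e) (a u : ZMod (g * e)) (m : ℕ)
    (hcard : (apSet (g * e) a (u * g) (m + 1)).card = m + 1) : m + 1 ≤ e := by
  by_contra hlt
  have h0 : ((g : ZMod (g * e)) * e) = 0 := by exact_mod_cast ZMod.natCast_self (g * e)
  have := (apSet_card_eq_iff _ _ _ _).1 hcard e (by omega) 0 (by omega)
    (by push_cast; linear_combination u * h0)
  omega

/-- If `(k - l) a` is a multiple of the common difference `u g`, the common difference can be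
replaced by the unit `u` without changing the first term or the size. -/
lemma sumFree_unit_step (e g k l : ℕ) (hg : 0 < g) (he : 0 < e)
    (a u : ZMod (g * e)) (hu : IsUnit u) (m : ℕ)
    (hfree : KLSumFree k l (apSet (g * e) a (u * g) (m + 1)))
    (w : ZMod (g * e)) (hw : (k : ZMod (g * e)) * a - l * a = w * (u * g)) :
    KLSumFree k l (apSet (g * e) a u (m + 1)) := by
  have : NeZero (g * e) := ⟨by positivity⟩
  have h0 : ((g : ZMod (g * e)) * e) = 0 := by exact_mod_cast ZMod.natCast_self (g * e)
  obtain ⟨c, hce, hc⟩ : ∃ c < e, (k : ZMod (g * e)) * a - l * a = c * (u * g) := by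
    refine ⟨w.val % e, Nat.mod_lt _ he, ?_⟩
    have h1 : ((w.val % e + e * (w.val / e) : ℕ) : ZMod (g * e)) = w := by
      rw [Nat.mod_add_div, ZMod.natCast_zmod_val]
    push_cast at h1
    rw [hw]
    linear_combination (-(u * g)) * h1 + u * ((w.val / e : ℕ) : ZMod (g * e)) * h0
  rw [klSumFree_apSet_iff] at hfree ⊢
  have hlow : l * m < c := by
    by_contra hlt
    refine hfree 0 (Nat.zero_le _) c (by omega) ?_
    push_cast
    linear_combination hc
  have hhigh : c + k * m < e := by
    by_contra hlt
    refine hfree (e - c) (by omega) 0 (Nat.zero_le _) ?_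
    rw [Nat.cast_sub hce.le]
    push_cast
    linear_combination hc + u * h0
  intro i hi j hj heq
  have h1 : u * ((c * g + i : ℕ) : ZMod (g * e)) = u * (j : ℕ) := by
    push_cast
    linear_combination heq - hc
  have h2 := hu.mul_left_cancel h1
  rw [ZMod.natCast_eq_natCast_iff] at h2
  have hcg : c ≤ c * g := Nat.le_mul_of_pos_right c hg
  -- `c * g + i - j` lies strictly between `0` and `g * e`, so it cannot be `0` modulo `g * e`.
  have hdvd := (Nat.modEq_iff_dvd' (by omega : j ≤ c * g + i)).1 h2.symm
  have hle := Nat.le_of_dvd (by omega) hdvd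
  have hexp : g * e = c * g + g * (e - c) := by
    obtain ⟨t, rfl⟩ := Nat.exists_eq_add_of_le hce.le
    rw [Nat.add_sub_cancel_left]; ring
  have : e - c ≤ g * (e - c) := Nat.le_mul_of_pos_left _ hg
  omega

/-- Every sum-free progression in `ZMod d` is dominated in density by one with unit common
difference, modulo `d` or a divisor of `d`. -/
lemma exists_dominating (d k l m : ℕ) (hd : 0 < d) (a b : ZMod d)
    (hcard : (apSet d a b (m + 1)).card = m + 1) (hfree : KLSumFree k l (apSet d a b (m + 1))) :
    ∃ g e, d = g * e ∧ m + 1 ≤ gammaZ g k l * e := by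
  obtain ⟨g, ⟨e, rfl⟩, u, hu, rfl⟩ := ZMod.eq_unit_mul_divisor b
  have hg : 0 < g := Nat.pos_of_mul_pos_right hd
  have he : 0 < e := Nat.pos_of_mul_pos_left hd
  have : NeZero (g * e) := ⟨hd.ne'⟩
  have : NeZero g := ⟨hg.ne'⟩
  have hme := size_le_order e g he a u m hcard
  by_cases hw : ∃ w, (k : ZMod (g * e)) * a - l * a = w * (u * g)
  · obtain ⟨w, hw⟩ := hw
    refine ⟨g * e, 1, by simp, ?_⟩
    rw [mul_one]
    refine le_csSup (bddAbove_gamma _ k l) ⟨a, u, gcd_val_of_isUnit hu, ?_,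
      sumFree_unit_step e g k l hg he a u hu m hfree w hw⟩
    rw [apSet_card_eq_iff]
    intro i hi j hj hij
    have h2 := hu.mul_right_cancel hij
    rw [ZMod.natCast_eq_natCast_iff] at h2
    have : e ≤ g * e := Nat.le_mul_of_pos_left _ hg
    exact Nat.ModEq.eq_of_lt_of_lt h2 (by omega) (by omega)
  · refine ⟨g, e, rfl, ?_⟩
    have h1 : 1 ≤ gammaZ g k l := by
      refine le_csSup (bddAbove_gamma _ k l)
        ⟨ZMod.castHom (dvd_mul_right g e) (ZMod g) a, 1, gcd_val_of_isUnit isUnit_one, ?_, ?_⟩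
      · rw [apSet_card_eq_iff]
        intro i hi j hj _
        omega
      · rw [klSumFree_apSet_iff g _ _ 0]
        intro i hi j hj heq
        obtain rfl : i = 0 := by omega
        obtain rfl : j = 0 := by omega
        apply hw
        set x := (k : ZMod (g * e)) * a - l * a with hx
        have hx0 : ZMod.castHom (dvd_mul_right g e) (ZMod g) x = 0 := by
          rw [hx, map_sub, map_mul, map_mul, map_natCast, map_natCast]
          simpa [sub_eq_zero] using heq
        rw [← ZMod.natCast_zmod_val x, map_natCast, ZMod.natCast_eq_zero_iff] at hx0
        obtain ⟨t, ht⟩ := hx0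
        obtain ⟨v, hv⟩ := hu.exists_left_inv
        refine ⟨v * t, ?_⟩
        rw [← ZMod.natCast_zmod_val x, ht]
        push_cast
        linear_combination (-(t : ZMod (g * e)) * g) * hv
    calc m + 1 ≤ 1 * e := by omega
      _ ≤ gammaZ g k l * e := Nat.mul_le_mul_right _ h1

theorem stmt2 (n k l : ℕ) (hn : 0 < n) (hl : 0 < l) (hkl : l < k) :
    n.divisors.sup (fun d => alphaZ d k l * (n / d)) =
      n.divisors.sup (fun d => gammaZ d k l * (n / d)) := by
  apply le_antisymm
  · apply Finset.sup_le
    intro d hd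
    obtain ⟨q, rfl⟩ := Nat.dvd_of_mem_divisors hd
    have hd0 : 0 < d := Nat.pos_of_mul_pos_right hn
    have : NeZero d := ⟨hd0.ne'⟩
    -- The empty progression makes the defining set nonempty, so the supremum is attained.
    have hmem := Nat.sSup_mem (s := {m | ∃ a b : ZMod d, (apSet d a b m).card = m ∧
      KLSumFree k l (apSet d a b m)}) ?_ (bddAbove_alpha d k l)
    · change alphaZ d k l ∈ _ at hmem
      obtain ⟨a, b, hcard, hfree⟩ := hmem
      rcases hm : alphaZ d k l with _ | m
      · simp
      rw [hm] at hcard hfree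
      obtain ⟨g, e, rfl, hle⟩ := exists_dominating d k l m hd0 a b hcard hfree
      have hg : 0 < g := Nat.pos_of_mul_pos_right hd0
      have hmain := Finset.le_sup (f := fun d => gammaZ d k l * (g * e * q / d))
        (Nat.mem_divisors.2 ⟨⟨e * q, mul_assoc g e q⟩, hn.ne'⟩ : g ∈ (g * e * q).divisors)
      refine le_trans ?_ hmain
      change (m + 1) * (g * e * q / (g * e)) ≤ gammaZ g k l * (g * e * q / g)
      rw [Nat.mul_div_cancel_left _ hd0, mul_assoc g, Nat.mul_div_cancel_left _ hg, ← mul_assoc]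
      exact Nat.mul_le_mul_right _ hle
    · refine ⟨0, 0, 0, by simp [apSet], ?_⟩
      obtain ⟨k, rfl⟩ := Nat.exists_eq_succ_of_ne_zero (by omega : k ≠ 0)
      simp [KLSumFree, foldSum, apSet]
  · refine Finset.sup_mono_fun fun d hd => Nat.mul_le_mul_right _ ?_
    have : NeZero d := ⟨(Nat.pos_of_mem_divisors hd).ne'⟩
    refine csSup_le_csSup' (bddAbove_alpha d k l) ?_
    rintro m ⟨a, b, -, h⟩
    exact ⟨a, b, h⟩
end

section
/- Let k, l, d, and m be positive integers with k > l, and let δ = gcd(d, k − l). Then Z_d contains a (k,l)-sum-free interval of size m if and only if k(m−1) + ⌈(l(m−1)+1)/δ⌉·δ < d. -/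
/-!
Write `M = m - 1` and `δ = gcd d (k - l)`. The `h`-fold sumset of the interval starting at `a` is the
interval `{h a, ..., h a + h M}` (`mem_foldSum_interval`). Put `x = (k - l) a`. The sumsets
`kA = l a + x + {0, ..., k M}` and `lA = l a + {0, ..., l M}` are disjoint exactly when the
representative of `x` in `[0, d)` satisfies `l M < x` and `x + k M < d`. As `a` varies, `x` runs over
exactly the multiples of `δ`, so a suitable `a` exists if and only if the least multiple of `δ` that is
at least `l M + 1`, namely `⌈(l M + 1) / δ⌉ δ`, is less than `d - k M`.
-/

open Finset Pointwise

theorem mem_foldSum_interval {d m : ℕ} (hm : 0 < m) (a : ZMod d) (h : ℕ) (x : ZMod d) :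
    x ∈ foldSum h ((Finset.range m).image (fun i : ℕ => a + (i : ZMod d))) ↔
      ∃ t : ℕ, t ≤ h * (m - 1) ∧ x = h * a + t := by
  induction h generalizing x with
  | zero => simp [foldSum]
  | succ h ih =>
    simp only [foldSum, Finset.mem_add, Finset.mem_image, Finset.mem_range, ih]
    constructor
    · rintro ⟨_, ⟨i, hi, rfl⟩, _, ⟨j, hj, rfl⟩, rfl⟩
      refine ⟨i + j, ?_, by push_cast; ring⟩
      rw [Nat.succ_mul]; omega
    · rintro ⟨t, ht, rfl⟩
      rw [Nat.succ_mul] at ht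
      refine ⟨_, ⟨min t (m - 1), by omega, rfl⟩, _, ⟨t - min t (m - 1), by omega, rfl⟩, ?_⟩
      have e : ((t : ℕ) : ZMod d) = ((min t (m - 1) + (t - min t (m - 1)) : ℕ) : ZMod d) := by
        congr 1; omega
      rw [e]; push_cast; ring

theorem klSumFree_interval_iff {d m : ℕ} (hm : 0 < m) (a : ZMod d) (k l : ℕ) :
    KLSumFree k l ((Finset.range m).image (fun i : ℕ => a + (i : ZMod d))) ↔
      ∀ i j : ℕ, i ≤ l * (m - 1) → j ≤ k * (m - 1) →
        (k * a + j : ZMod d) ≠ l * a + i := by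
  unfold KLSumFree
  rw [Finset.disjoint_left]
  simp only [mem_foldSum_interval hm]
  constructor
  · intro H i j hi hj e
    exact H ⟨j, hj, rfl⟩ ⟨i, hi, e⟩
  · rintro H _ ⟨j, hj, rfl⟩ ⟨i, hi, e⟩
    exact H i j hi hj e

theorem cdiv_le_iff {a b c : ℕ} (hb : 0 < b) : cdiv a b ≤ c ↔ a ≤ b * c := by
  unfold cdiv
  rw [← Nat.lt_succ_iff, Nat.div_lt_iff_lt_mul hb, Nat.succ_mul, mul_comm c b]
  omega

theorem stmt4 (d k l m : ℕ) (hd : 0 < d) (hm : 0 < m) (hl : 0 < l) (hkl : l < k) :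
    (∃ a : ZMod d, ((Finset.range m).image (fun i : ℕ => a + (i : ZMod d))).card = m ∧
        KLSumFree k l ((Finset.range m).image (fun i : ℕ => a + (i : ZMod d)))) ↔
      k * (m - 1) + cdiv (l * (m - 1) + 1) (Nat.gcd d (k - l)) * Nat.gcd d (k - l) < d := by
  have : NeZero d := ⟨hd.ne'⟩
  have hδ : 0 < Nat.gcd d (k - l) := Nat.gcd_pos_of_pos_left _ hd
  have hk : ∀ a : ZMod d, (k : ZMod d) * a = l * a + ((k - l : ℕ) : ZMod d) * a := by
    intro a
    rw [← add_mul, ← Nat.cast_add, Nat.add_sub_cancel' hkl.le]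
  constructor
  · rintro ⟨a, -, hsf⟩
    rw [klSumFree_interval_iff hm] at hsf
    -- the representative of `(k - l) a` in `[0, d)`
    obtain ⟨x, hx⟩ : ∃ x, x = (((k - l : ℕ) : ZMod d) * a).val := ⟨_, rfl⟩
    have hxd : x < d := hx ▸ ZMod.val_lt _
    have hxc : (x : ZMod d) = ((k - l : ℕ) : ZMod d) * a := by
      rw [hx, ZMod.natCast_zmod_val]
    have hdvd : Nat.gcd d (k - l) ∣ x := by
      have : x = ((k - l) * a.val) % d := by
        rw [hx, ← ZMod.val_natCast]; push_cast; rw [ZMod.natCast_zmod_val]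
      rw [this, Nat.dvd_mod_iff (Nat.gcd_dvd_left _ _)]
      exact (Nat.gcd_dvd_right _ _).mul_right _
    have h1 : l * (m - 1) < x := by
      by_contra! hle
      exact hsf x 0 hle (Nat.zero_le _) (by rw [hk, hxc]; simp)
    have h2 : x + k * (m - 1) < d := by
      by_contra! hle
      refine hsf 0 (d - x) (Nat.zero_le _) (by omega) ?_
      rw [hk, ← hxc, add_assoc, ← Nat.cast_add, Nat.add_sub_cancel' hxd.le]
      simp
    obtain ⟨c, rfl⟩ := hdvd
    have h3 : cdiv (l * (m - 1) + 1) (Nat.gcd d (k - l)) ≤ c := (cdiv_le_iff hδ).2 h1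
    have h4 := Nat.mul_le_mul_right (Nat.gcd d (k - l)) h3
    rw [mul_comm c] at h4
    omega
  · intro H
    have hy := (cdiv_le_iff (a := l * (m - 1) + 1) hδ).1 le_rfl
    rw [mul_comm (Nat.gcd d (k - l))] at hy
    generalize cdiv (l * (m - 1) + 1) (Nat.gcd d (k - l)) = c at H hy
    -- Bézout: `δ = (k - l) v` modulo `d`
    have hbez : ((Nat.gcd d (k - l) : ℕ) : ZMod d)
        = ((k - l : ℕ) : ZMod d) * ((Nat.gcdB d (k - l) : ℤ) : ZMod d) := by
      have := congrArg (Int.cast : ℤ → ZMod d) (Nat.gcd_eq_gcd_ab d (k - l))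
      simpa using this
    have hkm : m - 1 ≤ k * (m - 1) := Nat.le_mul_of_pos_left _ (by omega)
    have hlk : l * (m - 1) ≤ k * (m - 1) := Nat.mul_le_mul_right _ hkl.le
    refine ⟨c * ((Nat.gcdB d (k - l) : ℤ) : ZMod d), ?_, ?_⟩
    · rw [Finset.card_image_of_injOn, Finset.card_range]
      intro i hi j hj e
      simp only [Finset.coe_range, Set.mem_Iio] at hi hj
      have e' := (ZMod.natCast_eq_natCast_iff' _ _ _).1 (add_left_cancel e)
      rwa [Nat.mod_eq_of_lt (by omega), Nat.mod_eq_of_lt (by omega)] at e'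
    · rw [klSumFree_interval_iff hm]
      intro i j hi hj e
      rw [hk, mul_left_comm ((k - l : ℕ) : ZMod d), ← hbez, add_assoc] at e
      have e1 := add_left_cancel e
      rw [← Nat.cast_mul, ← Nat.cast_add] at e1
      have e' := (ZMod.natCast_eq_natCast_iff' _ _ _).1 e1
      rw [Nat.mod_eq_of_lt (by omega), Nat.mod_eq_of_lt (by omega)] at e'
      omega
end

section
/- For all positive integers k, l, and d with k > l, the maximum size γ(Z_d,{k,l}) of a (k,l)-sum-free arithmetic progression in Z_d whose common difference is relatively prime to d satisfies γ(Z_d,{k,l}) ≥ ⌊d/(k+l)⌋. -/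
/-!
Let `m = ⌊d/(k+l)⌋`; only `m ≥ 1` matters. The interval `A = {a, a+1, …, a+m-1}` is
`(k,l)`-sum-free as soon as `(k-l)a + [-l(m-1), k(m-1)]`, which represents `kA - lA`, lies strictly
between `0` and `d`. That is, `(k-l)a` must lie strictly between `l(m-1)` and `d - k(m-1)`. These
bounds leave at least `k+l-1 ≥ k-l` consecutive integers since `m(k+l) ≤ d`, so a multiple of `k-l`
is available, and the smallest one exceeding `l(m-1)` is used.
-/

open Finset Pointwise

/-- An element of the `h`-fold sumset of an interval lifts to an integer in the expected range. -/
lemma exists_lift_of_mem_foldSum (d a m h : ℕ) (x : ZMod d)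
    (hx : x ∈ foldSum h (apSet d (a : ZMod d) 1 m)) :
    ∃ n : ℕ, x = (n : ZMod d) ∧ h * a ≤ n ∧ n ≤ h * (a + (m - 1)) := by
  induction h generalizing x with
  | zero =>
    refine ⟨0, ?_, by simp, by simp⟩
    simpa [foldSum] using hx
  | succ h ih =>
    simp only [foldSum, Finset.mem_add] at hx
    obtain ⟨y, hy, z, hz, rfl⟩ := hx
    obtain ⟨n, rfl, h1, h2⟩ := ih z hz
    simp only [apSet, Finset.mem_image, Finset.mem_range] at hy
    obtain ⟨i, hi, rfl⟩ := hy
    refine ⟨a + i + n, by simp, ?_, ?_⟩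
    · rw [Nat.succ_mul]; omega
    · rw [Nat.succ_mul]; omega

lemma card_apSet_one (d a m : ℕ) (hm : m ≤ d) :
    (apSet d (a : ZMod d) 1 m).card = m := by
  rw [apSet, Finset.card_image_of_injOn, Finset.card_range]
  intro i hi j hj hij
  simp only [Finset.coe_range, Set.mem_Iio] at hi hj
  have h : (i : ZMod d) = (j : ZMod d) := by simpa using hij
  rw [ZMod.natCast_eq_natCast_iff] at h
  exact Nat.ModEq.eq_of_lt_of_lt h (by omega) (by omega)

lemma klSumFree_interval (d k l a m : ℕ) (hlow : l * (a + (m - 1)) < k * a)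
    (hupp : k * (a + (m - 1)) < l * a + d) :
    KLSumFree k l (apSet d (a : ZMod d) 1 m) := by
  rw [KLSumFree, Finset.disjoint_left]
  intro x hxk hxl
  obtain ⟨n, rfl, hn1, hn2⟩ := exists_lift_of_mem_foldSum d a m k x hxk
  obtain ⟨n', he, hn1', hn2'⟩ := exists_lift_of_mem_foldSum d a m l _ hxl
  rw [eq_comm, ZMod.natCast_eq_natCast_iff, Nat.modEq_iff_dvd' (by omega)] at he
  have := Nat.le_of_dvd (by omega) he
  omega

theorem stmt5 (d k l : ℕ) (hd : 0 < d) (hl : 0 < l) (hkl : l < k) :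
    d / (k + l) ≤ gammaZ d k l := by
  have : NeZero d := ⟨hd.ne'⟩
  obtain hm | hm := Nat.eq_zero_or_pos (d / (k + l))
  · omega
  have hbdd : BddAbove {m | ∃ a b : ZMod d, Nat.gcd (ZMod.val b) d = 1 ∧
      (apSet d a b m).card = m ∧ KLSumFree k l (apSet d a b m)} := by
    refine ⟨d, ?_⟩
    rintro m ⟨a, b, -, hc, -⟩
    rw [← hc]
    simpa [ZMod.card] using Finset.card_le_univ (apSet d a b m)
  refine le_csSup hbdd ?_
  have hmd : d / (k + l) * (k + l) ≤ d := Nat.div_mul_le_self _ _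
  have hle : d / (k + l) ≤ d := Nat.div_le_self _ _
  generalize d / (k + l) = m at hm hmd hle ⊢
  obtain ⟨r, rfl⟩ : ∃ r, m = r + 1 := ⟨m - 1, by omega⟩
  obtain ⟨c, rfl⟩ : ∃ c, k = l + c := ⟨k - l, by omega⟩
  have hc : 0 < c := by omega
  -- `c * a` is the smallest multiple of `c = k - l` exceeding `l * (m - 1)`.
  obtain ⟨a, ha⟩ : ∃ a, a = l * r / c + 1 := ⟨_, rfl⟩
  have h1 : l * r < c * a := by
    rw [ha]; exact Nat.lt_mul_div_succ _ hc
  have h2 : c * a ≤ l * r + c := by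
    have := Nat.mul_div_le (l * r) c
    rw [ha, mul_add]; omega
  refine ⟨(a : ZMod d), 1, ?_, card_apSet_one d a _ hle, ?_⟩
  -- For `d = 1` the residue `1` has `val` equal to `0`, which is still coprime to `1`.
  · obtain rfl | hd1 : d = 1 ∨ 1 < d := by omega
    · simp
    · rw [ZMod.val_one'' hd1.ne']; simp
  · apply klSumFree_interval
    · simp only [Nat.add_sub_cancel]
      nlinarith
    · simp only [Nat.add_sub_cancel]
      nlinarith
end

section
/- For all positive integers n, the maximum size of a sum-free subset of Z_n equals max over all positive divisors d of n of ⌈(d−1)/3⌉ · (n/d). -/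
/-!
The lower bound at a divisor `d` of `n`, with `m = ⌈(d - 1) / 3⌉`, is given by the set of residues
mod `n` that reduce mod `d` into the interval `[m, 2m)`; it is sum-free because `3m - 2 < d`.

For the upper bound let `A` be a nonempty sum-free set in a finite abelian group `G` of order `n`.
Among the nonempty `X` with `X + A ≠ G`, take those with `|X + A| - |X|` minimal, and among these
one with `|X|` minimal (an *atom* of `A`, in Hamidoune's terminology). Two atoms that meet are equal
(`atom_eq_of_inter`), so an atom containing `0` is a subgroup `H` (`exists_atom_subgroup`).
Hence `|X + A| ≥ |X| + |H + A| - |H|` whenever `X` is nonempty and `X + A ≠ G`.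

Put `S = H + A`, a union of `k` cosets of `H`, and let `d` be the index of `H`.
* If `S` is sum-free, then `X = S` gives `3|S| ≤ n + |H|`, that is `3k - 1 ≤ d`, and
  `|A| ≤ k |H|` is bounded by the term of the maximum at `d`. If `A ⊆ H`, the same inequality holds
  because `k = 1` and `d ≥ 2`.
* Otherwise some `x, y ∈ A` with `y ∉ H` have `x + y ∈ S`. Since `A` is sum-free, `S \ A` then has
  at least `|H|` elements (`card_add_card_le_of_add_mem`), and `X = A` gives `3|A| ≤ n`, so `|A|` is
  bounded by the term of the maximum at `n`.
-/

open Finset Pointwise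

section Atoms

variable {G : Type*} [AddCommGroup G] [Fintype G] [DecidableEq G]

/-- `X` is an atom of `A`: it minimises `|X + A| - |X|` among the nonempty sets with `X + A ≠ G`,
and has the smallest size among the minimisers. The minimality of `|X + A| - |X|` is written
without subtraction. -/
structure IsAtomOf (A X : Finset G) : Prop where
  nonempty : X.Nonempty
  ne_univ : X + A ≠ univ
  min_diff : ∀ Y : Finset G, Y.Nonempty → Y + A ≠ univ → #(X + A) + #Y ≤ #(Y + A) + #X
  min_card : ∀ Y : Finset G, Y.Nonempty → Y + A ≠ univ →
    #(Y + A) + #X ≤ #(X + A) + #Y → #X ≤ #Y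

lemma exists_atom (A : Finset G) (hA : A ≠ univ) : ∃ X, IsAtomOf A X := by
  classical
  let F : Finset (Finset G) := univ.filter fun Y => Y.Nonempty ∧ Y + A ≠ univ
  have hF : F.Nonempty := ⟨{0}, by simpa [F, singleton_add] using hA⟩
  obtain ⟨X₀, hX₀, h₀⟩ := F.exists_min_image (fun Y => (#(Y + A) : ℤ) - #Y) hF
  let E := F.filter fun Y => (#(Y + A) : ℤ) - #Y ≤ #(X₀ + A) - #X₀
  have hE : E.Nonempty := ⟨X₀, by simp [E, hX₀]⟩
  obtain ⟨X, hX, h₁⟩ := E.exists_min_image (fun Y => #Y) hE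
  simp only [E, F, mem_filter, mem_univ, true_and] at hX h₀ h₁
  refine ⟨X, hX.1.1, hX.1.2, fun Y hY hYA => ?_, fun Y hY hYA h => ?_⟩
  · have := h₀ Y ⟨hY, hYA⟩
    have := hX.2
    omega
  · have := hX.2
    exact h₁ Y ⟨⟨hY, hYA⟩, by omega⟩

/-- If `X` is an atom, the negative of the complement of `X + A` competes with `X` in the minimum,
which bounds the size of `X`. -/
lemma IsAtomOf.card_add_card_le {A X : Finset G} (hX : IsAtomOf A X) :
    #X + #(X + A) ≤ Fintype.card G := by
  have hc : #(-(X + A)ᶜ) + #(X + A) = Fintype.card G := by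
    rw [card_neg, add_comm, card_add_card_compl]
  have hdisj : Disjoint (-(X + A)ᶜ + A) (-X) := by
    rw [disjoint_left]
    intro z hz hzX
    obtain ⟨y, hy, a, ha, rfl⟩ := mem_add.1 hz
    rw [mem_neg', mem_compl] at hy
    rw [mem_neg'] at hzX
    exact hy (mem_add.2 ⟨_, hzX, a, ha, by abel⟩)
  have hle : #(-(X + A)ᶜ + A) + #X ≤ Fintype.card G := by
    rw [← card_neg X, ← card_union_of_disjoint hdisj]
    exact card_le_univ _
  have hne : (-(X + A)ᶜ).Nonempty := by
    rw [← card_pos]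
    have := card_lt_univ_of_notMem (s := X + A) (x := _)
      (Classical.choose_spec (not_forall.1 fun h => hX.ne_univ (eq_univ_iff_forall.2 h)))
    omega
  have hX0 := hX.nonempty.card_pos
  have := hX.min_card _ hne (fun h => by rw [h, card_univ] at hle; omega) (by omega)
  omega

lemma atom_eq_of_inter {A X Y : Finset G} (hX : IsAtomOf A X) (hY : IsAtomOf A Y)
    (h : (X ∩ Y).Nonempty) : X = Y := by
  have hsub : (X ∩ Y) + A ⊆ (X + A) ∩ (Y + A) :=
    subset_inter (add_subset_add_right inter_subset_left) (add_subset_add_right inter_subset_right)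
  have hne : (X ∩ Y) + A ≠ univ := fun h' => hX.ne_univ <| by
    rw [← univ_subset_iff, ← h']
    exact hsub.trans inter_subset_left
  have h1 := card_le_card hsub
  have h2 := card_union_add_card_inter (X + A) (Y + A)
  have h3 := card_union_add_card_inter X Y
  rw [← union_add] at h2
  have h4 := hX.min_diff _ h hne
  have h5 := hX.min_diff _ hY.nonempty hY.ne_univ
  have h6 := hY.min_diff _ hX.nonempty hX.ne_univ
  have h7 := hX.min_card _ hY.nonempty hY.ne_univ (by omega)
  have h8 := hY.min_card _ hX.nonempty hX.ne_univ (by omega)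
  have h9 := hX.card_add_card_le
  have h10 := h.card_pos
  have hU : (X ∪ Y) + A ≠ univ := fun h' => by
    rw [h', card_univ] at h2
    omega
  have h11 := hX.min_diff _ (hX.nonempty.mono subset_union_left) hU
  have h12 := hX.min_card _ h hne (by omega)
  have e1 := eq_of_subset_of_card_le (inter_subset_left (s₁ := X) (s₂ := Y)) h12
  have e2 := eq_of_subset_of_card_le (inter_subset_right (s₁ := X) (s₂ := Y)) (by omega)
  exact e1.symm.trans e2

lemma IsAtomOf.vadd {A X : Finset G} (hX : IsAtomOf A X) (g : G) : IsAtomOf A (g +ᵥ X) where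
  nonempty := hX.nonempty.vadd_finset
  ne_univ h := hX.ne_univ <| by
    rw [← card_eq_iff_eq_univ] at h ⊢
    rwa [vadd_add_assoc, card_vadd_finset] at h
  min_diff := by simpa [vadd_add_assoc] using hX.min_diff
  min_card := by simpa [vadd_add_assoc] using hX.min_card

/-- A consequence of the existence of atoms: a subgroup `H`, with underlying finset `K`, that
minimises `|X + A| - |X|` among the nonempty `X` with `X + A ≠ G`. -/
lemma exists_atom_subgroup (A : Finset G) (hA : A ≠ univ) :
    ∃ (H : AddSubgroup G) (K : Finset G), (∀ x, x ∈ K ↔ x ∈ H) ∧ K + A ≠ univ ∧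
      ∀ X : Finset G, X.Nonempty → X + A ≠ univ → #(K + A) + #X ≤ #(X + A) + #K := by
  obtain ⟨X, hX⟩ := exists_atom A hA
  obtain ⟨x, hx⟩ := hX.nonempty
  obtain ⟨K, hK, h0⟩ : ∃ K, IsAtomOf A K ∧ (0 : G) ∈ K :=
    ⟨-x +ᵥ X, hX.vadd _, mem_vadd_finset.2 ⟨x, hx, by simp⟩⟩
  have key : ∀ g ∈ K, -g +ᵥ K = K := fun g hg =>
    atom_eq_of_inter (hK.vadd _) hK
      ⟨0, mem_inter.2 ⟨mem_vadd_finset.2 ⟨g, hg, by simp⟩, h0⟩⟩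
  have hneg : ∀ g ∈ K, -g ∈ K := fun g hg => by
    rw [← key g hg]
    exact mem_vadd_finset.2 ⟨0, h0, by simp⟩
  refine ⟨{ carrier := K, zero_mem' := h0, neg_mem' := fun {g} hg => hneg g hg,
            add_mem' := fun {a b} ha hb => ?_ }, K, fun _ => Iff.rfl, hK.ne_univ, hK.min_diff⟩
  have := key _ (hneg a ha)
  rw [neg_neg] at this
  rw [mem_coe, ← this]
  exact mem_vadd_finset.2 ⟨b, hb, rfl⟩

/-- For `h ∈ H`, at least one of `x + h` and `x + h + y` lies outside the sum-free set `A`. Choosing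
one such element for each `h` gives an injection of `H` into `(H + A) \ A`, because `y ∉ H` puts
the two options in different cosets. -/
lemma card_add_card_le_of_add_mem {A K : Finset G} {H : AddSubgroup G} (hK : ∀ x, x ∈ K ↔ x ∈ H)
    (hA : ∀ a ∈ A, ∀ b ∈ A, a + b ∉ A) {x y : G} (hx : x ∈ A) (hy : y ∈ A) (hyH : y ∉ H)
    (hxy : x + y ∈ K + A) : #A + #K ≤ #(K + A) := by
  have hsub : A ⊆ K + A := fun a ha =>
    mem_add.2 ⟨0, (hK 0).2 H.zero_mem, a, ha, zero_add a⟩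
  have hcard : #K ≤ #((K + A) \ A) := by
    refine card_le_card_of_injOn (fun h => if x + h ∈ A then x + h + y else x + h) ?_ ?_
    · intro h hh
      simp only [coe_sdiff, Set.mem_sdiff, mem_coe] at hh ⊢
      split_ifs with hxh
      · refine ⟨?_, hA _ hxh _ hy⟩
        obtain ⟨k, hk, a, ha, hka⟩ := mem_add.1 hxy
        refine mem_add.2 ⟨h + k, (hK _).2 (H.add_mem ((hK _).1 hh) ((hK _).1 hk)), a, ha, ?_⟩
        rw [add_assoc, hka]
        abel
      · exact ⟨mem_add.2 ⟨h, hh, x, hx, add_comm _ _⟩, hxh⟩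
    · intro h hh h' hh' heq
      have m1 := H.sub_mem ((hK _).1 hh) ((hK _).1 hh')
      have m2 := H.neg_mem m1
      simp only at heq
      split_ifs at heq
      · simpa using heq
      · refine absurd ?_ hyH
        rw [eq_sub_of_add_eq' heq]
        convert m2 using 1
        abel
      · refine absurd ?_ hyH
        rw [eq_sub_of_add_eq' heq.symm]
        convert m1 using 1
        abel
      · simpa using heq
  have := card_sdiff_add_card_eq_card hsub
  omega

/-- A sum-free set is small either because it lies in few cosets of a subgroup or because it fills
at most a third of the group. -/
lemma sumFree_dichotomy (A : Finset G) (hne : A.Nonempty) (hA : ∀ a ∈ A, ∀ b ∈ A, a + b ∉ A) :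
    3 * #A ≤ Fintype.card G ∨
      ∃ q k d : ℕ, d * q = Fintype.card G ∧ 0 < q ∧ 3 * k ≤ d + 1 ∧ #A ≤ k * q := by
  have disj_card : ∀ B : Finset G, B.Nonempty → Disjoint (B + A) B →
      B + A ≠ univ ∧ #(B + A) + #B ≤ Fintype.card G := fun B hB hd => by
    have hle : #(B + A) + #B ≤ Fintype.card G := by
      rw [← card_union_of_disjoint hd]
      exact card_le_univ _
    refine ⟨fun h => ?_, hle⟩
    have := hB.card_pos
    rw [h, card_univ] at hle
    omega
  have hAA : Disjoint (A + A) A := by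
    rw [disjoint_left]
    intro z hz
    obtain ⟨a, ha, b, hb, rfl⟩ := mem_add.1 hz
    exact hA a ha b hb
  obtain ⟨hAA1, hAA2⟩ := disj_card A hne hAA
  have hAu : A ≠ univ := by
    rintro rfl
    exact hA 0 (mem_univ _) 0 (mem_univ _) (mem_univ _)
  obtain ⟨H, K, hK, hKA, hmin⟩ := exists_atom_subgroup A hAu
  have h0K : (0 : G) ∈ K := (hK 0).2 H.zero_mem
  have hsub : A ⊆ K + A := fun a ha => mem_add.2 ⟨0, h0K, a, ha, zero_add a⟩
  have hKpos : 0 < #K := card_pos.2 ⟨0, h0K⟩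
  by_cases hxy : ∃ x ∈ A, ∃ y ∈ A, y ∉ H ∧ x + y ∈ K + A
  · obtain ⟨x, hx, y, hy, hyH, hxy⟩ := hxy
    have h1 := card_add_card_le_of_add_mem hK hA hx hy hyH hxy
    have h2 := hmin A hne hAA1
    left
    omega
  right
  have hKcard : #K = Nat.card H := by
    rw [← Nat.card_eq_finsetCard]
    exact Nat.card_congr (Equiv.subtypeEquivRight hK)
  have hdvd : #K ∣ Fintype.card G := by
    rw [hKcard, ← Nat.card_eq_fintype_card]
    exact H.card_addSubgroup_dvd_card
  have hdvd' : #K ∣ #(K + A) := by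
    refine card_dvd_card_add_left ?_
    rintro _ ⟨a, -, rfl⟩ _ ⟨b, -, rfl⟩ hab
    -- cosets of `H` that meet are equal
    refine disjoint_left.2 fun w hw hw' => hab ?_
    simp only [id, mem_image] at hw hw'
    obtain ⟨h, hh, rfl⟩ := hw
    obtain ⟨h', hh', e⟩ := hw'
    have hm : b - a ∈ H := by
      have : b - a = h - h' := by
        rw [eq_sub_of_add_eq' e]
        abel
      rw [this]
      exact H.sub_mem ((hK _).1 hh) ((hK _).1 hh')
    ext w
    simp only [mem_image]
    constructor
    · rintro ⟨u, hu, rfl⟩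
      exact ⟨u - (b - a), (hK _).2 (H.sub_mem ((hK _).1 hu) hm), by abel⟩
    · rintro ⟨u, hu, rfl⟩
      exact ⟨u + (b - a), (hK _).2 (H.add_mem ((hK _).1 hu) hm), by abel⟩
  have main : 3 * #(K + A) ≤ Fintype.card G + #K := by
    by_cases hAH : ∃ z ∈ A, z ∉ H
    · obtain ⟨z, hz, hzH⟩ := hAH
      have hS : Disjoint ((K + A) + A) (K + A) := by
        rw [disjoint_left]
        intro w hw hwS
        obtain ⟨s, hs, y, hy, rfl⟩ := mem_add.1 hw
        obtain ⟨h, hh, x, hx, rfl⟩ := mem_add.1 hs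
        have hxyS : x + y ∈ K + A := by
          obtain ⟨k, hk, a, ha, hka⟩ := mem_add.1 hwS
          refine mem_add.2 ⟨k - h, (hK _).2 (H.sub_mem ((hK _).1 hk) ((hK _).1 hh)), a, ha, ?_⟩
          rw [sub_add_eq_add_sub, hka]
          abel
        by_cases hyH : y ∈ H
        · -- adding `y ∈ H` does not change the coset of `z`, so `y + z ∈ K + A`
          refine hxy ⟨y, hy, z, hz, hzH, mem_add.2 ⟨y, (hK y).2 hyH, z, hz, rfl⟩⟩
        · exact hxy ⟨x, hx, y, hy, hyH, hxyS⟩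
      have hSne : (K + A).Nonempty := hne.mono hsub
      obtain ⟨h1, h2⟩ := disj_card _ hSne hS
      have := hmin _ hSne h1
      omega
    · push Not at hAH
      have hSK : K + A ⊆ K := fun w hw => by
        obtain ⟨h, hh, x, hx, rfl⟩ := mem_add.1 hw
        exact (hK _).2 (H.add_mem ((hK _).1 hh) (hAH x hx))
      have h1 := card_le_card hSK
      have h2 : #K < Fintype.card G := by
        refine lt_of_le_of_ne (card_le_univ _) fun h => hKA ?_
        rw [← card_eq_iff_eq_univ]
        have := Nat.le_of_dvd (hne.mono hsub).card_pos hdvd'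
        omega
      obtain ⟨d, hd⟩ := hdvd
      -- a proper subgroup has index at least two
      have h3 : 2 ≤ d := by
        by_contra! h
        interval_cases d <;> omega
      have := Nat.mul_le_mul_left #K h3
      omega
  obtain ⟨d, hd⟩ := hdvd
  obtain ⟨k, hk⟩ := hdvd'
  refine ⟨#K, k, d, by rw [hd, mul_comm], hKpos, ?_, ?_⟩
  · rw [hk, hd] at main
    refine Nat.le_of_mul_le_mul_left ?_ hKpos
    linarith
  · rw [mul_comm, ← hk]
    exact card_le_card hsub

end Atoms

lemma kLSumFree_two_one_iff {G : Type*} [AddCommMonoid G] [DecidableEq G] (A : Finset G) :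
    KLSumFree 2 1 A ↔ ∀ a ∈ A, ∀ b ∈ A, a + b ∉ A := by
  have h0 : A + {0} = A := add_zero A
  simp only [KLSumFree, foldSum, h0, disjoint_left]
  constructor
  · exact fun h a ha b hb => h (add_mem_add ha hb)
  · intro h z hz
    obtain ⟨a, ha, b, hb, rfl⟩ := mem_add.1 hz
    exact h a ha b hb

lemma cdiv_pred_three {d : ℕ} (hd : 0 < d) : cdiv (d - 1) 3 = (d + 1) / 3 := by
  unfold cdiv
  congr 1
  omega

/-- The residues mod `n` that reduce mod `d` into `[m, 2m)`, parametrised as `m + i + d * j` with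
`i < m` and `j < n / d`. -/
lemma exists_sumFree_card {n d : ℕ} (hn : 0 < n) (hd : d ∣ n) :
    ∃ A : Finset (ZMod n), (∀ a ∈ A, ∀ b ∈ A, a + b ∉ A) ∧ #A = (d + 1) / 3 * (n / d) := by
  obtain ⟨e, rfl⟩ := hd
  have hd0 : 0 < d := Nat.pos_of_mul_pos_right hn
  rw [Nat.mul_div_cancel_left e hd0]
  obtain ⟨m, hm⟩ : ∃ m, m = (d + 1) / 3 := ⟨_, rfl⟩
  rw [← hm]
  refine ⟨(range m ×ˢ range e).image fun p => ((m + p.1 + d * p.2 : ℕ) : ZMod (d * e)), ?_, ?_⟩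
  · intro a ha b hb hab
    simp only [mem_image, mem_product, mem_range, Prod.exists] at ha hb hab
    obtain ⟨i, j, ⟨hi, -⟩, rfl⟩ := ha
    obtain ⟨i', j', ⟨hi', -⟩, rfl⟩ := hb
    obtain ⟨i'', j'', ⟨hi'', -⟩, h⟩ := hab
    rw [← Nat.cast_add, ZMod.natCast_eq_natCast_iff] at h
    have hmod : (m + i'') ≡ (m + i) + (m + i') [MOD d] := by
      have := h.of_mul_right e
      simpa [Nat.ModEq, Nat.add_mod] using this
    rw [Nat.modEq_iff_dvd] at hmod
    -- the difference `m + i + i' - i''` lies strictly between `0` and `d`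
    have := Int.le_of_dvd (by push_cast; omega) hmod
    push_cast at this
    omega
  · rw [card_image_of_injOn, card_product, card_range, card_range]
    rintro ⟨i, j⟩ hp ⟨i', j'⟩ hp' h
    simp only [coe_product, coe_range, Set.mem_prod, Set.mem_Iio] at hp hp'
    have hlt : ∀ i j, i < m → j < e → m + i + d * j < d * e := fun i j hi hj => by
      have := Nat.mul_le_mul_left d hj
      rw [Nat.mul_succ] at this
      omega
    simp only [ZMod.natCast_eq_natCast_iff] at h
    have h := h.eq_of_lt_of_lt (hlt i j hp.1 hp.2) (hlt i' j' hp'.1 hp'.2)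
    have h1 : (m + i) % d = (m + i') % d := by
      have := congrArg (· % d) h
      simpa using this
    rw [Nat.mod_eq_of_lt (by omega), Nat.mod_eq_of_lt (by omega)] at h1
    have hii : i = i' := by omega
    subst hii
    have : j = j' := Nat.eq_of_mul_eq_mul_left hd0 (by omega)
    rw [this]

lemma sumFree_card_le {n : ℕ} (hn : 0 < n) (A : Finset (ZMod n))
    (hA : ∀ a ∈ A, ∀ b ∈ A, a + b ∉ A) :
    #A ≤ n.divisors.sup (fun d => cdiv (d - 1) 3 * (n / d)) := by
  have : NeZero n := ⟨hn.ne'⟩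
  have hle : ∀ d, d ∣ n → (d + 1) / 3 * (n / d) ≤
      n.divisors.sup (fun d => cdiv (d - 1) 3 * (n / d)) := fun d hd => by
    rw [← cdiv_pred_three (Nat.pos_of_dvd_of_pos hd hn)]
    exact le_sup (f := fun d => cdiv (d - 1) 3 * (n / d)) (Nat.mem_divisors.2 ⟨hd, hn.ne'⟩)
  rcases A.eq_empty_or_nonempty with rfl | hne
  · simp
  rcases sumFree_dichotomy A hne hA with h | ⟨q, k, d, hdq, hq, hk, hAk⟩
  · rw [ZMod.card] at h
    refine le_trans ?_ (hle n dvd_rfl)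
    rw [Nat.div_self hn]
    omega
  · rw [ZMod.card] at hdq
    have hd0 : 0 < d := Nat.pos_of_ne_zero fun h => by simp [h] at hdq; omega
    refine le_trans ?_ (hle d ⟨q, hdq.symm⟩)
    rw [Nat.div_eq_of_eq_mul_right hd0 hdq.symm]
    exact hAk.trans (Nat.mul_le_mul_right q (by omega))

theorem stmt6 (n : ℕ) (hn : 0 < n) :
    mu (ZMod n) 2 1 = n.divisors.sup (fun d => cdiv (d - 1) 3 * (n / d)) := by
  have hub : ∀ m ∈ {m | ∃ A : Finset (ZMod n), KLSumFree 2 1 A ∧ A.card = m},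
      m ≤ n.divisors.sup (fun d => cdiv (d - 1) 3 * (n / d)) := by
    rintro m ⟨A, hA, rfl⟩
    exact sumFree_card_le hn A ((kLSumFree_two_one_iff A).1 hA)
  refine le_antisymm (csSup_le ⟨0, ∅, by simp [kLSumFree_two_one_iff], rfl⟩ hub) ?_
  refine Finset.sup_le fun d hd => le_csSup ⟨_, hub⟩ ?_
  obtain ⟨A, hA, hcard⟩ := exists_sumFree_card hn (Nat.dvd_of_mem_divisors hd)
  exact ⟨A, (kLSumFree_two_one_iff A).2 hA,
    by rw [hcard, cdiv_pred_three (Nat.pos_of_mem_divisors hd)]⟩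
end

section
/- Let n, k, and l be positive integers with k > l. If k − l is relatively prime to n, then the maximum size of a (k,l)-sum-free subset of Z_n equals max over all positive divisors d of n of ⌈(d−1)/(k+l)⌉ · (n/d). -/
/-!
The upper bound is Kneser's theorem; the lower bound is an explicit progression.

*Kneser's theorem* is proved in the form `|A + B| + |stab (A + B)| ≥ |A| + |B|`
(`card_add_card_le`). Dyson's transform shows that every point of `A + B` lies in some
`C ⊆ A + B` with `|C| + |H| ≥ |A| + |B|` for a subgroup `H` of periods of `C`
(`exists_periodic_subset`). Kemperman's counting argument (`HasPeriods.union`) shows that this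
property passes to unions, hence to `A + B`. Iterating gives, for `S = kA - lA` with stabilizer
`H`, the inequality `|S| + (k + l - 1)|H| ≥ (k + l)|A|`.

*Upper bound.* Let `A` be a `(k,l)`-sum-free set of maximum size. Sum-freeness says `0 ∉ S`. As
`S` is `H`-periodic, `A + H` is sum-free too, so `A = A + H` and `|A| = m|H|` for some `m`; moreover
`|S| ≤ n - |H|`. With `d = n / |H|` the inequality becomes `(k + l) m ≤ d - 1 + (k + l - 1)`, that is
`m ≤ ⌈(d - 1)/(k + l)⌉`.

*Lower bound.* For `d ∣ n` and `m = ⌈(d - 1)/(k + l)⌉ ≥ 1`, pick `a` with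
`(k - l) a ≡ l (m - 1) + 1 (mod d)`. Modulo `d`, the interval `I = {a, …, a + m - 1}` satisfies
`kI - lI = {1, …, (k + l)(m - 1) + 1}`, which avoids `0` because `(k + l)(m - 1) + 1 < d`. The
preimage of `I` in `ℤ/n` is the required set.
-/

open Finset Pointwise

section Kneser

set_option linter.unusedSectionVars false

variable {G : Type*} [AddCommGroup G] [Fintype G] [DecidableEq G]

/-! ### Periodic sets -/

/-- `C` is invariant under translation by elements of `H`. -/
def IsPeriodic (C : Finset G) (H : AddSubgroup G) : Prop :=
  ∀ c ∈ C, ∀ h ∈ H, c + h ∈ C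

/-- The stabilizer of `C` under translation. -/
def stab (C : Finset G) : AddSubgroup G where
  carrier := {g | ∀ c, c + g ∈ C ↔ c ∈ C}
  zero_mem' := by intro c; simp
  add_mem' := by
    intro a b ha hb c
    rw [← add_assoc, hb, ha]
  neg_mem' := by
    intro a ha c
    rw [← ha (c + -a)]; simp

lemma stab_periodic (C : Finset G) : IsPeriodic C (stab C) :=
  fun c hc _ hh => (hh c).2 hc

lemma IsPeriodic.le_stab {C : Finset G} {H : AddSubgroup G} (h : IsPeriodic C H) :
    H ≤ stab C := by
  intro g hg c
  refine ⟨fun hc => ?_, fun hc => h c hc g hg⟩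
  simpa using h _ hc (-g) (H.neg_mem hg)

lemma card_le_of_le {H K : AddSubgroup G} (h : H ≤ K) : Nat.card H ≤ Nat.card K :=
  Nat.card_le_card_of_injective _ (AddSubgroup.inclusion_injective h)

open Classical in
lemma card_coset (H : AddSubgroup G) (c : G) :
    (univ.filter (fun g => g - c ∈ H)).card = Nat.card H := by
  rw [Nat.card_eq_fintype_card, Fintype.card_subtype]
  refine Finset.card_bij (fun g _ => g - c) ?_ ?_ ?_
  · simp
  · intro a _ b _ h; simpa using h
  · intro b hb; exact ⟨b + c, by simpa using hb, by simp⟩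

lemma IsPeriodic.card_dvd {C : Finset G} {H : AddSubgroup G} (h : IsPeriodic C H) :
    Nat.card H ∣ C.card := by
  classical
  rw [Finset.card_eq_sum_card_image (fun g : G => (g : G ⧸ H)) C]
  refine Finset.dvd_sum ?_
  intro q hq
  obtain ⟨c, hc, rfl⟩ := Finset.mem_image.1 hq
  rw [← card_coset H c]
  apply dvd_of_eq
  congr 1
  ext g
  simp only [mem_filter, mem_univ, true_and]
  constructor
  · intro hg
    refine ⟨by simpa using h c hc _ hg, ?_⟩
    rw [eq_comm, QuotientAddGroup.eq]
    simpa [sub_eq_add_neg, add_comm] using hg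
  · rintro ⟨_, hg⟩
    rw [eq_comm, QuotientAddGroup.eq] at hg
    simpa [sub_eq_add_neg, add_comm] using hg

/-! ### Kemperman's union lemma -/

/-- If `V` and `X` lie in cosets of `H₁` and `H₂`, each point of `V + X` has at most `|H₁ ∩ H₂|`
representations. -/
lemma card_mul_card_le (H₁ H₂ : AddSubgroup G) (c : G) (V X : Finset G)
    (hV : ∀ v ∈ V, v - c ∈ H₁) (hX : ∀ x ∈ X, x - c ∈ H₂) (D : Finset G)
    (hD : ∀ v ∈ V, ∀ x ∈ X, v + x - c ∈ D) :
    V.card * X.card ≤ Nat.card (H₁ ⊓ H₂ : AddSubgroup G) * D.card := by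
  classical
  rw [← Finset.card_product]
  refine Finset.card_le_mul_card_image_of_maps_to (f := fun p : G × G => p.1 + p.2 - c) ?_ _ ?_
  · rintro ⟨v, x⟩ h
    rw [Finset.mem_product] at h
    exact hD v h.1 x h.2
  · intro s _
    rcases Finset.eq_empty_or_nonempty
      ((V ×ˢ X).filter (fun p : G × G => p.1 + p.2 - c = s)) with h0 | ⟨⟨v0, x0⟩, h0⟩
    · rw [h0]; simp
    · rw [← card_coset _ v0]
      simp only [mem_filter, mem_product] at h0
      refine Finset.card_le_card_of_injOn (fun p => p.1) ?_ ?_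
      · rintro ⟨v, x⟩ h
        simp only [coe_filter, mem_product, Set.mem_ofPred_eq] at h
        simp only [coe_filter, mem_univ, true_and, Set.mem_ofPred_eq]
        constructor
        · simpa using H₁.sub_mem (hV v h.1.1) (hV v0 h0.1.1)
        · have e : v - v0 = (x0 - c) - (x - c) := by
            have := h.2.trans h0.2.symm
            rw [sub_left_inj] at this
            rw [sub_sub_sub_cancel_right, sub_eq_sub_iff_add_eq_add, this, add_comm]
          rw [e]
          exact H₂.sub_mem (hX x0 h0.1.2) (hX x h.1.2)
      · rintro ⟨v, x⟩ h ⟨v', x'⟩ h' e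
        simp only [coe_filter, mem_product, Set.mem_ofPred_eq] at h h' e
        subst e
        have := h.2.trans h'.2.symm
        rw [sub_left_inj, add_right_inj] at this
        rw [this]

/-- Local form of the union lemma, at a point `c ∈ C₂ \ C₁`. In the coset `c + H₁ + H₂`, viewed as a
grid of cosets of `H₁ ∩ H₂`, the set `C₁` is a union of rows and `C₂` a union of columns. -/
lemma union_local (C₁ C₂ : Finset G) (H₁ H₂ : AddSubgroup G) (h₁ : IsPeriodic C₁ H₁)
    (h₂ : IsPeriodic C₂ H₂) (c : G) (hc2 : c ∈ C₂) (hc1 : c ∉ C₁) :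
    Nat.card H₁ ≤ (C₂ \ C₁).card + Nat.card (H₁ ⊓ H₂ : AddSubgroup G) ∨
    Nat.card H₂ ≤ (C₁ \ C₂).card + Nat.card (H₁ ⊓ H₂ : AddSubgroup G) ∨
    Nat.card H₂ ≤ (C₂ \ C₁).card := by
  classical
  set H := H₁ ⊓ H₂ with hH
  set h := Nat.card H
  have hpos : 0 < h := Nat.card_pos
  -- The row of `c` splits into `V` and `Y`, its column into `X` and `U`.
  set V := univ.filter (fun g => g - c ∈ H₁ ∧ g ∈ C₂) with hVd
  set Y := univ.filter (fun g => g - c ∈ H₁ ∧ g ∉ C₂) with hYd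
  set X := univ.filter (fun g => g - c ∈ H₂ ∧ g ∉ C₁) with hXd
  set U := univ.filter (fun g => g - c ∈ H₂ ∧ g ∈ C₁) with hUd
  have hVY : V.card + Y.card = Nat.card H₁ := by
    rw [← card_coset H₁ c, ← Finset.card_filter_add_card_filter_not (s := univ.filter (fun g => g - c ∈ H₁))
      (fun g => g ∈ C₂)]
    simp only [filter_filter, hVd, hYd]
  have hXU : U.card + X.card = Nat.card H₂ := by
    rw [← card_coset H₂ c, ← Finset.card_filter_add_card_filter_not (s := univ.filter (fun g => g - c ∈ H₂))
      (fun g => g ∈ C₁)]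
    simp only [filter_filter, hXd, hUd]
  have key : ∀ (K : AddSubgroup G) (C : Finset G), IsPeriodic C K → ∀ a g, g - a ∈ K →
      (g ∈ C ↔ a ∈ C) := by
    intro K C hC a g hg
    constructor
    · intro hh
      have := hC _ hh _ (K.neg_mem hg)
      simpa using this
    · intro hh
      have := hC _ hh _ hg
      simpa using this
  have e1 : V.card * X.card ≤ h * (C₂ \ C₁).card := by
    refine card_mul_card_le H₁ H₂ c V X (by simp +contextual [hVd]) (by simp +contextual [hXd]) _ ?_
    intro v hv x hx
    simp only [hVd, hXd, mem_filter, mem_univ, true_and] at hv hx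
    rw [mem_sdiff, key H₂ C₂ h₂ v _ (by convert hx.1 using 1; abel),
      key H₁ C₁ h₁ x _ (by convert hv.1 using 1; abel)]
    exact ⟨hv.2, hx.2⟩
  have e2 : Y.card * U.card ≤ h * (C₁ \ C₂).card := by
    refine card_mul_card_le H₁ H₂ c Y U (by simp +contextual [hYd]) (by simp +contextual [hUd]) _ ?_
    intro v hv x hx
    simp only [hYd, hUd, mem_filter, mem_univ, true_and] at hv hx
    rw [mem_sdiff, key H₂ C₂ h₂ v _ (by convert hx.1 using 1; abel),
      key H₁ C₁ h₁ x _ (by convert hv.1 using 1; abel)]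
    exact ⟨hx.2, hv.2⟩
  -- A nonempty one of these four sets contains a full coset of `H₁ ∩ H₂`.
  have big : ∀ (S : Finset G) (a : G), (∀ g, g - a ∈ H → g ∈ S) → h ≤ S.card := by
    intro S a hS
    refine (card_coset H a).symm.le.trans ?_
    exact Finset.card_le_card (fun g hg => hS g (by simpa using hg))
  have hV : h ≤ V.card := by
    refine big V c fun g hg => ?_
    simp only [hVd, mem_filter, mem_univ, true_and]
    exact ⟨hg.1, (key H₂ C₂ h₂ c g hg.2).2 hc2⟩
  have hX : h ≤ X.card := by
    refine big X c fun g hg => ?_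
    simp only [hXd, mem_filter, mem_univ, true_and]
    exact ⟨hg.2, fun hh => hc1 ((key H₁ C₁ h₁ c g hg.1).1 hh)⟩
  rcases Y.eq_empty_or_nonempty with hY0 | ⟨y, hy⟩
  · left
    rw [hY0, card_empty, add_zero] at hVY
    have : h * V.card ≤ h * (C₂ \ C₁).card := by nlinarith
    have := Nat.le_of_mul_le_mul_left this hpos
    omega
  rcases U.eq_empty_or_nonempty with hU0 | ⟨u, hu⟩
  · right; right
    rw [hU0, card_empty, zero_add] at hXU
    have : h * X.card ≤ h * (C₂ \ C₁).card := by nlinarith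
    have := Nat.le_of_mul_le_mul_left this hpos
    omega
  have hY : h ≤ Y.card := by
    simp only [hYd, mem_filter, mem_univ, true_and] at hy
    refine big Y y fun g hg => ?_
    simp only [hYd, mem_filter, mem_univ, true_and]
    refine ⟨by simpa using H₁.add_mem hg.1 hy.1, fun hh => hy.2 ((key H₂ C₂ h₂ y g hg.2).1 hh)⟩
  have hU : h ≤ U.card := by
    simp only [hUd, mem_filter, mem_univ, true_and] at hu
    refine big U u fun g hg => ?_
    simp only [hUd, mem_filter, mem_univ, true_and]
    refine ⟨by simpa using H₂.add_mem hg.2 hu.1, (key H₁ C₁ h₁ u g hg.1).2 hu.2⟩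
  by_contra! hcon
  obtain ⟨n1, n2, -⟩ := hcon
  rw [← hVY] at n1
  rw [← hXU] at n2
  obtain ⟨v, hv⟩ := Nat.exists_eq_add_of_le hV
  obtain ⟨x, hx⟩ := Nat.exists_eq_add_of_le hX
  obtain ⟨y, hy⟩ := Nat.exists_eq_add_of_le hY
  obtain ⟨u, hu⟩ := Nat.exists_eq_add_of_le hU
  rw [hv, hx] at e1
  rw [hy, hu] at e2
  rw [hv, hy] at n1
  rw [hu, hx] at n2
  have f1 : h * (C₂ \ C₁).card < h * (h + v + y) := Nat.mul_lt_mul_of_pos_left (by omega) hpos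
  have f2 : h * (C₁ \ C₂).card < h * (h + u + x) := Nat.mul_lt_mul_of_pos_left (by omega) hpos
  have g1 : h * x < h * y := by nlinarith [Nat.zero_le (v * x)]
  have g2 : h * y < h * x := by nlinarith [Nat.zero_le (u * y)]
  omega

/-- `C` has a subgroup `H` of periods with `|C| + |H| ≥ N`. -/
def HasPeriods (N : ℕ) (C : Finset G) : Prop :=
  ∃ H : AddSubgroup G, IsPeriodic C H ∧ N ≤ C.card + Nat.card H

lemma HasPeriods.union {N : ℕ} {C₁ C₂ : Finset G} (p₁ : HasPeriods N C₁)
    (p₂ : HasPeriods N C₂) : HasPeriods N (C₁ ∪ C₂) := by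
  by_cases s12 : C₁ ⊆ C₂
  · rwa [Finset.union_eq_right.2 s12]
  by_cases s21 : C₂ ⊆ C₁
  · rwa [Finset.union_eq_left.2 s21]
  obtain ⟨H₁, h₁, n₁⟩ := p₁
  obtain ⟨H₂, h₂, n₂⟩ := p₂
  obtain ⟨a, ha1, ha2⟩ := Finset.not_subset.1 s12
  obtain ⟨b, hb2, hb1⟩ := Finset.not_subset.1 s21
  refine ⟨H₁ ⊓ H₂, ?_, ?_⟩
  · intro c hc h hh
    rw [mem_union] at hc ⊢
    exact hc.imp (fun hc => h₁ c hc h hh.1) (fun hc => h₂ c hc h hh.2)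
  · have L1 := union_local C₁ C₂ H₁ H₂ h₁ h₂ b hb2 hb1
    have L2 := union_local C₂ C₁ H₂ H₁ h₂ h₁ a ha1 ha2
    rw [inf_comm H₂ H₁] at L2
    have c1 : (C₁ ∪ C₂).card = C₁.card + (C₂ \ C₁).card := by
      rw [← Finset.union_sdiff_self_eq_union, Finset.card_union_of_disjoint disjoint_sdiff]
    have c2 : (C₁ ∪ C₂).card = C₂.card + (C₁ \ C₂).card := by
      rw [union_comm, ← Finset.union_sdiff_self_eq_union,
        Finset.card_union_of_disjoint disjoint_sdiff]
    omega

/-! ### Kneser's theorem -/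

/-- Proved by Dyson's transform `(A, B) ↦ (A ∪ (B + e), B ∩ (A - e))` with `e ∈ A`, inducting on
`|B|`. When no transform shrinks `B`, the set `B` consists of periods of `A`. -/
lemma exists_periodic_subset (N : ℕ) : ∀ (m : ℕ) (A B : Finset G), B.card = m → 0 ∈ B →
    N ≤ A.card + B.card → ∀ a ∈ A, ∃ C, a ∈ C ∧ C ⊆ A + B ∧ HasPeriods N C := by
  intro m
  induction m using Nat.strong_induction_on with
  | _ m ih =>
  intro A B hm h0 hN a ha
  by_cases hall : ∀ e ∈ A, ∀ b ∈ B, e + b ∈ A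
  · refine ⟨A, ha, fun x hx => ?_, stab A, stab_periodic A, ?_⟩
    · simpa using Finset.add_mem_add hx h0
    · refine hN.trans (Nat.add_le_add_left ?_ _)
      have hB : ∀ b ∈ B, b ∈ stab A := by
        intro b hb
        -- Translation by `b` maps the finite set `A` injectively into itself, hence onto itself.
        have himg : A.image (fun x => x + b) = A := by
          apply Finset.eq_of_subset_of_card_le
          · intro x hx
            obtain ⟨e, he, rfl⟩ := Finset.mem_image.1 hx
            exact hall e he b hb
          · rw [Finset.card_image_of_injective _ (add_left_injective b)]
        intro c
        refine ⟨fun hc => ?_, fun hc => hall c hc b hb⟩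
        rw [← himg] at hc
        obtain ⟨e, he, hec⟩ := Finset.mem_image.1 hc
        have : e = c := add_left_injective b hec
        rwa [← this]
      classical
      rw [Nat.card_eq_fintype_card, Fintype.card_subtype]
      exact Finset.card_le_card (fun b hb => by simpa using hB b hb)
  · push Not at hall
    obtain ⟨e, he, b, hb, heb⟩ := hall
    set B' := B.filter (fun x => e + x ∈ A) with hB'
    set D := (B.filter (fun x => e + x ∉ A)).image (fun x => e + x) with hD
    have hDc : D.card = (B.filter (fun x => e + x ∉ A)).card :=
      Finset.card_image_of_injective _ (add_right_injective e)
    have hsum : B'.card + D.card = B.card := by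
      rw [hDc]; exact Finset.card_filter_add_card_filter_not _
    have hDpos : 0 < D.card := by
      rw [hDc]; exact Finset.card_pos.2 ⟨b, by simp [hb, heb]⟩
    have hdis : Disjoint A D := by
      rw [Finset.disjoint_right]
      intro x hx
      obtain ⟨y, hy, rfl⟩ := Finset.mem_image.1 hx
      exact (Finset.mem_filter.1 hy).2
    have hcard : (A ∪ D).card = A.card + D.card := Finset.card_union_of_disjoint hdis
    obtain ⟨C, haC, hCs, hCp⟩ := ih B'.card (by omega) (A ∪ D) B' rfl
      (by simp [hB', h0, he]) (by omega) a (mem_union_left _ ha)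
    refine ⟨C, haC, hCs.trans ?_, hCp⟩
    intro z hz
    obtain ⟨x, hx, y, hy, rfl⟩ := Finset.mem_add.1 hz
    rw [hB', mem_filter] at hy
    rcases mem_union.1 hx with hx | hx
    · exact Finset.add_mem_add hx hy.1
    · obtain ⟨w, hw, rfl⟩ := Finset.mem_image.1 hx
      have := Finset.add_mem_add hy.2 (Finset.mem_filter.1 hw).1
      convert this using 1
      abel

/-- Kneser's theorem. Applied to `A + H` and `B + H` with `H = stab (A + B)`, it gives the usual form
`|A + H| + |B + H| ≤ |A + B| + |H|`. -/
lemma card_add_card_le (A B : Finset G) (hA : A.Nonempty) (hB : B.Nonempty) :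
    A.card + B.card ≤ (A + B).card + Nat.card (stab (A + B)) := by
  set N := A.card + B.card with hN
  have cover : ∀ p : G × G, ∃ C : Finset G, p ∈ A ×ˢ B →
      p.1 + p.2 ∈ C ∧ C ⊆ A + B ∧ HasPeriods N C := by
    rintro ⟨a, b⟩
    by_cases hp : (a, b) ∈ A ×ˢ B
    swap
    · exact ⟨∅, fun h => absurd h hp⟩
    rw [mem_product] at hp
    obtain ⟨ha, hb⟩ := hp
    simp only at ha hb
    -- Translate so that `b` moves to `0`.
    have hA' : (A.image (fun x => x + b)).card = A.card :=
      Finset.card_image_of_injective _ (add_left_injective b)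
    have hB' : (B.image (fun x => x - b)).card = B.card :=
      Finset.card_image_of_injective _ (sub_left_injective)
    obtain ⟨C, h1, h2, h3⟩ := exists_periodic_subset N _ (A.image (fun x => x + b))
      (B.image (fun x => x - b)) rfl (mem_image.2 ⟨b, hb, by simp⟩) (by omega) (a + b)
      (mem_image_of_mem _ ha)
    refine ⟨C, fun _ => ⟨h1, h2.trans ?_, h3⟩⟩
    intro z hz
    obtain ⟨x, hx, y, hy, rfl⟩ := Finset.mem_add.1 hz
    obtain ⟨x', hx', rfl⟩ := Finset.mem_image.1 hx
    obtain ⟨y', hy', rfl⟩ := Finset.mem_image.1 hy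
    convert Finset.add_mem_add hx' hy' using 1
    abel
  choose C hC using cover
  have hne : (A ×ˢ B).Nonempty := hA.product hB
  have hsup : (A ×ˢ B).sup' hne C = A + B := by
    apply le_antisymm
    · exact Finset.sup'_le _ _ (fun p hp => (hC p hp).2.1)
    · intro z hz
      obtain ⟨x, hx, y, hy, rfl⟩ := Finset.mem_add.1 hz
      have hp : (x, y) ∈ A ×ˢ B := mem_product.2 ⟨hx, hy⟩
      exact Finset.le_sup' C hp (hC _ hp).1
  have hper : HasPeriods N ((A ×ˢ B).sup' hne C) :=
    Finset.sup'_induction hne C (fun _ h _ h' => h.union h') (fun p hp => (hC p hp).2.2)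
  rw [hsup] at hper
  obtain ⟨H, h1, h2⟩ := hper
  exact h2.trans (Nat.add_le_add_left (card_le_of_le h1.le_stab) _)

/-! ### Iterated sumsets -/

lemma stab_le_stab_add (A B : Finset G) : stab B ≤ stab (A + B) := by
  apply IsPeriodic.le_stab
  intro c hc h hh
  obtain ⟨a, ha, b, hb, rfl⟩ := Finset.mem_add.1 hc
  rw [add_assoc]
  exact Finset.add_mem_add ha (stab_periodic B b hb h hh)

lemma stab_le_stab_neg (B : Finset G) : stab B ≤ stab (-B) := by
  apply IsPeriodic.le_stab
  intro c hc h hh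
  rw [Finset.mem_neg'] at hc ⊢
  have := stab_periodic B _ hc (-h) (AddSubgroup.neg_mem _ hh)
  convert this using 1
  abel

lemma foldSum_nonempty_s9 (A : Finset G) (hA : A.Nonempty) (j : ℕ) : (foldSum j A).Nonempty := by
  induction j with
  | zero => exact ⟨0, by simp [foldSum]⟩
  | succ j ih => exact hA.add ih

lemma foldSum_card (A : Finset G) (hA : A.Nonempty) (j : ℕ) :
    (j + 1) * A.card ≤ (foldSum (j + 1) A).card + j * Nat.card (stab (foldSum (j + 1) A)) := by
  induction j with
  | zero => simp [foldSum]
  | succ j ih =>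
    have h1 := card_add_card_le A (foldSum (j + 1) A) hA (foldSum_nonempty_s9 A hA _)
    have h2 := card_le_of_le (stab_le_stab_add A (foldSum (j + 1) A))
    change _ ≤ (A + foldSum (j + 1) A).card + (j + 1) * Nat.card (stab (A + foldSum (j + 1) A))
    nlinarith

lemma foldSum_sub_card (A : Finset G) (hA : A.Nonempty) (k l : ℕ) :
    (k + l + 2) * A.card ≤ (foldSum (k + 1) A + -foldSum (l + 1) A).card +
      (k + l + 1) * Nat.card (stab (foldSum (k + 1) A + -foldSum (l + 1) A)) := by
  have hk := foldSum_card A hA k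
  have hl := foldSum_card A hA l
  set K := foldSum (k + 1) A with hKd
  set L := foldSum (l + 1) A with hLd
  have h1 := card_add_card_le K (-L) (foldSum_nonempty_s9 A hA _) (foldSum_nonempty_s9 A hA _).neg
  rw [Finset.card_neg] at h1
  have hK : Nat.card (stab K) ≤ Nat.card (stab (K + -L)) := by
    rw [add_comm]
    exact card_le_of_le (stab_le_stab_add _ _)
  have hL : Nat.card (stab L) ≤ Nat.card (stab (K + -L)) :=
    card_le_of_le ((stab_le_stab_neg L).trans (stab_le_stab_add _ _))
  nlinarith

/-- A fold sum of a set `A'` of `H`-translates of `A` lies in `H`-translates of the fold sum. -/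
lemma foldSum_enlarge (A A' : Finset G) (H : AddSubgroup G)
    (hA : ∀ x ∈ A', ∃ y ∈ A, x - y ∈ H) (j : ℕ) :
    ∀ x ∈ foldSum j A', ∃ y ∈ foldSum j A, x - y ∈ H := by
  induction j with
  | zero =>
    intro x hx
    exact ⟨x, hx, by simp⟩
  | succ j ih =>
    intro x hx
    obtain ⟨a, ha, b, hb, rfl⟩ := Finset.mem_add.1 hx
    obtain ⟨a', ha', h1⟩ := hA a ha
    obtain ⟨b', hb', h2⟩ := ih b hb
    refine ⟨a' + b', Finset.add_mem_add ha' hb', ?_⟩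
    rw [add_sub_add_comm]
    exact H.add_mem h1 h2

/-! ### The upper bound -/

lemma upper_bound (k l : ℕ) (A : Finset G) (hA : A.Nonempty)
    (hfree : KLSumFree (k + 1) (l + 1) A)
    (hmax : ∀ A' : Finset G, KLSumFree (k + 1) (l + 1) A' → A'.card ≤ A.card) :
    ∃ d h, d * h = Fintype.card G ∧ A.card ≤ cdiv (d - 1) (k + 1 + (l + 1)) * h := by
  classical
  set S := foldSum (k + 1) A + -foldSum (l + 1) A with hS
  set H := stab S with hH
  have h0 : (0 : G) ∉ S := by
    intro h
    obtain ⟨x, hx, y, hy, hxy⟩ := Finset.mem_add.1 h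
    rw [Finset.mem_neg'] at hy
    rw [add_eq_zero_iff_eq_neg.1 hxy] at hx
    exact Finset.disjoint_left.1 hfree hx hy
  set A' := univ.filter (fun x => ∃ y ∈ A, x - y ∈ H) with hA'
  have hfree' : KLSumFree (k + 1) (l + 1) A' := by
    rw [KLSumFree, Finset.disjoint_left]
    intro x hx hx'
    have hAH : ∀ x ∈ A', ∃ y ∈ A, x - y ∈ H := by simp [hA']
    obtain ⟨y, hy, hxy⟩ := foldSum_enlarge A A' H hAH _ x hx
    obtain ⟨z, hz, hxz⟩ := foldSum_enlarge A A' H hAH _ x hx'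
    have hyz : y + -z ∈ S := Finset.add_mem_add hy (Finset.neg_mem_neg hz)
    have := stab_periodic S _ hyz _ (H.sub_mem hxy hxz)
    apply h0
    convert this using 1
    abel
  have hsub : A ⊆ A' := by
    intro x hx
    simp only [hA', mem_filter, mem_univ, true_and]
    exact ⟨x, hx, by simp⟩
  have heq : A = A' := Finset.eq_of_subset_of_card_le hsub (hmax A' hfree')
  have hper : IsPeriodic A H := by
    intro c hc g hg
    rw [heq]
    simp only [hA', mem_filter, mem_univ, true_and]
    exact ⟨c, hc, by simpa using hg⟩
  obtain ⟨m, hm⟩ := hper.card_dvd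
  obtain ⟨d, hd⟩ := AddSubgroup.card_addSubgroup_dvd_card H
  rw [Nat.card_eq_fintype_card (α := G)] at hd
  have hSc : S.card + Nat.card H ≤ Fintype.card G := by
    rw [← card_coset H 0, ← Finset.card_union_of_disjoint]
    · exact Finset.card_le_univ _
    · rw [Finset.disjoint_left]
      intro x hx hx'
      simp only [mem_filter, mem_univ, true_and, sub_zero] at hx'
      apply h0
      simpa using stab_periodic S _ hx _ (H.neg_mem hx')
  have hmain := foldSum_sub_card A hA k l
  rw [← hS, ← hH] at hmain
  have hpos : 0 < Nat.card H := Nat.card_pos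
  refine ⟨d, Nat.card H, by rw [hd, mul_comm], ?_⟩
  rw [hm, mul_comm]
  refine Nat.mul_le_mul_right _ ?_
  rw [hm] at hmain
  rw [hd] at hSc
  generalize Nat.card H = h at *
  have e : h * ((k + l + 2) * m + 1) ≤ h * (d + (k + l + 1)) := by nlinarith
  have e' := Nat.le_of_mul_le_mul_left e hpos
  have hd1 : 0 < d := by
    rcases Nat.eq_zero_or_pos d with rfl | h'
    · simp at hSc; omega
    · exact h'
  rw [cdiv, Nat.le_div_iff_mul_le (by omega)]
  have : m * (k + 1 + (l + 1)) = (k + l + 2) * m := by ring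
  omega

end Kneser

/-! ### The lower bound -/

lemma foldSum_image_interval {G : Type*} [AddCommGroup G] [DecidableEq G] (d : ℕ) (f : G →+ ZMod d)
    (A : Finset G) (a : ZMod d) (m : ℕ) (hA : ∀ x ∈ A, ∃ i : ℕ, i ≤ m ∧ f x = a + i) (j : ℕ) :
    ∀ x ∈ foldSum j A, ∃ i : ℕ, i ≤ j * m ∧ f x = j * a + i := by
  induction j with
  | zero =>
    intro x hx
    simp only [foldSum, mem_singleton] at hx
    exact ⟨0, by simp, by simp [hx]⟩
  | succ j ih =>
    intro x hx
    obtain ⟨y, hy, z, hz, rfl⟩ := Finset.mem_add.1 hx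
    obtain ⟨i, hi, e1⟩ := hA y hy
    obtain ⟨i', hi', e2⟩ := ih z hz
    refine ⟨i + i', by nlinarith, ?_⟩
    rw [map_add, e1, e2]
    push_cast
    ring

lemma lower_bound (n k l d : ℕ) (hn : 0 < n) (hl : 0 < l) (hkl : l < k)
    (hco : Nat.Coprime (k - l) n) (hd : d ∣ n) :
    ∃ A : Finset (ZMod n), KLSumFree k l A ∧ A.card = cdiv (d - 1) (k + l) * (n / d) := by
  obtain ⟨r, rfl⟩ := hd
  have hd0 : 0 < d := Nat.pos_of_mul_pos_right hn
  have hr0 : 0 < r := Nat.pos_of_mul_pos_left hn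
  rw [Nat.mul_div_cancel_left _ hd0]
  have hmdef : cdiv (d - 1) (k + l) * (k + l) ≤ d - 1 + (k + l) - 1 := Nat.div_mul_le_self _ _
  generalize cdiv (d - 1) (k + l) = m at *
  rcases Nat.eq_zero_or_pos m with rfl | hm
  · refine ⟨∅, ?_, by simp⟩
    obtain ⟨k', rfl⟩ : ∃ k', k = k' + 1 := ⟨k - 1, by omega⟩
    simp [KLSumFree, foldSum]
  obtain ⟨m, rfl⟩ : ∃ m', m = m' + 1 := ⟨m - 1, by omega⟩
  have hmd : m * (k + l) + 2 ≤ d := by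
    have : (m + 1) * (k + l) = m * (k + l) + (k + l) := by ring
    rw [this] at hmdef
    have : 0 < m * (k + l) ∨ m = 0 := by
      rcases Nat.eq_zero_or_pos m with h | h
      · exact Or.inr h
      · left; apply Nat.mul_pos h; omega
    omega
  have hmd' : m + 1 < d := by nlinarith
  have : NeZero d := ⟨hd0.ne'⟩
  obtain ⟨α, hα⟩ : ∃ α : ℕ, ((k - l : ℕ) : ZMod d) * (α : ZMod d) = ((l * m + 1 : ℕ) : ZMod d) := by
    have hc : Nat.Coprime (k - l) d := Nat.Coprime.coprime_mul_right_right hco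
    refine ⟨(((k - l : ℕ) : ZMod d)⁻¹ * ((l * m + 1 : ℕ) : ZMod d)).val, ?_⟩
    rw [ZMod.natCast_zmod_val, ← mul_assoc, ZMod.coe_mul_inv_eq_one _ hc, one_mul]
  set φ : ℕ × ℕ → ZMod (d * r) := fun p => ((α + (p.1 + d * p.2) : ℕ) : ZMod (d * r)) with hφ
  refine ⟨(range (m + 1) ×ˢ range r).image φ, ?_, ?_⟩
  · have hA : ∀ x ∈ (range (m + 1) ×ˢ range r).image φ, ∃ i : ℕ, i ≤ m ∧
        (ZMod.castHom (Dvd.intro r rfl) (ZMod d)).toAddMonoidHom x = (α : ZMod d) + i := by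
      intro x hx
      obtain ⟨⟨i, t⟩, hp, rfl⟩ := Finset.mem_image.1 hx
      simp only [mem_product, mem_range] at hp
      refine ⟨i, by omega, ?_⟩
      simp only [hφ, RingHom.toAddMonoidHom_eq_coe, AddMonoidHom.coe_coe, map_natCast]
      push_cast
      simp
    rw [KLSumFree, Finset.disjoint_left]
    intro x hx hx'
    obtain ⟨i, hi, e⟩ := foldSum_image_interval d _ _ _ m hA k x hx
    obtain ⟨j, hj, e'⟩ := foldSum_image_interval d _ _ _ m hA l x hx'
    rw [e] at e'
    have hz : (((l * m - j) + 1 + i : ℕ) : ZMod d) = 0 := by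
      have h1 : (((l * m - j : ℕ) : ZMod d)) = (l : ZMod d) * m - j := by
        rw [Nat.cast_sub hj]; push_cast; ring
      rw [Nat.cast_sub hkl.le] at hα
      push_cast at hα ⊢
      rw [h1]
      linear_combination e' - hα
    rw [ZMod.natCast_eq_zero_iff] at hz
    have := Nat.le_of_dvd (by omega) hz
    have : m * (k + l) = k * m + l * m := by ring
    omega
  · rw [Finset.card_image_of_injOn]
    · simp
    · rintro ⟨i, t⟩ hp ⟨i', t'⟩ hp' heq
      simp only [coe_product, coe_range, Set.mem_prod, Set.mem_Iio] at hp hp'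
      simp only [hφ] at heq
      rw [ZMod.natCast_eq_natCast_iff] at heq
      have heq := Nat.ModEq.add_left_cancel' α heq
      have bound : ∀ i t, i < m + 1 → t < r → i + d * t < d * r := by
        intro i t hi ht
        have : d * (t + 1) ≤ d * r := Nat.mul_le_mul_left _ ht
        rw [mul_add] at this
        omega
      have heq := heq.eq_of_lt_of_lt (bound i t hp.1 hp.2) (bound i' t' hp'.1 hp'.2)
      have hi : i = i' := by
        have := congrArg (· % d) heq
        simpa [Nat.add_mul_mod_self_left, Nat.mod_eq_of_lt (show i < d by omega),
          Nat.mod_eq_of_lt (show i' < d by omega)] using this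
      subst hi
      have : t = t' := Nat.eq_of_mul_eq_mul_left hd0 (Nat.add_left_cancel heq)
      rw [this]

theorem stmt9 (n k l : ℕ) (hn : 0 < n) (hl : 0 < l) (hkl : l < k)
    (hco : Nat.Coprime (k - l) n) :
    mu (ZMod n) k l = n.divisors.sup (fun d => cdiv (d - 1) (k + l) * (n / d)) := by
  have : NeZero n := ⟨hn.ne'⟩
  set M := {m | ∃ A : Finset (ZMod n), KLSumFree k l A ∧ A.card = m} with hM
  have hbdd : BddAbove M := by
    refine ⟨Fintype.card (ZMod n), ?_⟩
    rintro m ⟨A, _, rfl⟩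
    exact Finset.card_le_univ A
  have hne : M.Nonempty := by
    obtain ⟨A, hA⟩ := lower_bound n k l 1 hn hl hkl hco (one_dvd n)
    exact ⟨_, A, hA⟩
  change sSup M = _
  apply le_antisymm
  · obtain ⟨A, hfree, hcard⟩ := Nat.sSup_mem hne hbdd
    rw [← hcard]
    rcases A.eq_empty_or_nonempty with rfl | hA
    · simp
    obtain ⟨k, rfl⟩ : ∃ k', k = k' + 1 := ⟨k - 1, by omega⟩
    obtain ⟨l, rfl⟩ : ∃ l', l = l' + 1 := ⟨l - 1, by omega⟩
    obtain ⟨d, h, hdh, hle⟩ := upper_bound k l A hA hfree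
      (fun A' hA' => hcard ▸ le_csSup hbdd ⟨A', hA', rfl⟩)
    rw [ZMod.card] at hdh
    have hd0 : 0 < d := Nat.pos_of_mul_pos_right (hdh ▸ hn)
    have hquot : n / d = h := by rw [← hdh, Nat.mul_div_cancel_left _ hd0]
    refine hle.trans ?_
    rw [← hquot]
    exact Finset.le_sup (f := fun d => cdiv (d - 1) (k + 1 + (l + 1)) * (n / d))
      (Nat.mem_divisors.2 ⟨Dvd.intro h hdh, hn.ne'⟩)
  · refine Finset.sup_le fun d hd => ?_
    obtain ⟨A, hA⟩ := lower_bound n k l d hn hl hkl hco (Nat.dvd_of_mem_divisors hd)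
    exact le_csSup hbdd ⟨A, hA⟩
end
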